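/- arXiv:1405.1803 — 9 statements merged into one kernel-verified Lean document; each statement's English description precedes it below -/
import Mathlib

section
/- For all positive integers n, q and every natural number k with 0 \le k \le (q-1)n, the polynomial coefficient has the integral representation C(n,q,k) = (2/\pi) \int_0^{\pi/2} D_q(\theta)^n \cos(((q-1)n - 2k)\theta) \, d\theta, where D_q(\theta) = \sin(q\theta)/\sin(\theta) for 0 < \theta \le \pi/2 and D_q(0) = q (the continuous extension). -/
open MeasureTheory Real

/-- The polynomial coefficient `C(n,q,k)`: the coefficient of `x^k` in
`(1 + x + x^2 + ⋯ + x^(q-1))^n`. -/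
noncomputable def polyCoeff (n q k : ℕ) : ℕ :=
  ((∑ i ∈ Finset.range q, Polynomial.X ^ i : Polynomial ℕ) ^ n).coeff k

/-- The Dirichlet-type kernel `D_q(θ) = sin (qθ) / sin θ`, extended continuously by
`D_q(0) = q`. -/
noncomputable def Dker (q : ℕ) (θ : ℝ) : ℝ :=
  if θ = 0 then (q : ℝ) else Real.sin (q * θ) / Real.sin θ

/-- The geometric sum in `exp (2iθ)` in terms of sines, with denominators cleared. -/
theorem sin_mul_geom_sum_exp (q : ℕ) (θ : ℝ) :
    (Real.sin θ : ℂ) * Complex.exp (θ * Complex.I) *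
        ∑ i ∈ Finset.range q, Complex.exp (2 * θ * Complex.I) ^ i =
      (Real.sin (q * θ) : ℂ) * Complex.exp (q * θ * Complex.I) := by
  induction q with
  | zero => simp
  | succ q ih =>
    rw [Finset.sum_range_succ, mul_add, ih, ← Complex.exp_nat_mul]
    have h1 : Complex.exp (q * (2 * θ * Complex.I)) =
        Complex.exp (q * θ * Complex.I) * Complex.exp (q * θ * Complex.I) := by
      rw [← Complex.exp_add]; ring_nf
    have h2 : Complex.exp ((q + 1 : ℕ) * θ * Complex.I) =
        Complex.exp (q * θ * Complex.I) * Complex.exp (θ * Complex.I) := by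
      rw [← Complex.exp_add]; push_cast; ring_nf
    have h3 : (Real.sin (((q + 1 : ℕ) : ℝ) * θ) : ℂ) =
        Complex.sin (q * θ) * Complex.cos θ + Complex.cos (q * θ) * Complex.sin θ := by
      rw [← Complex.sin_add]; push_cast; ring_nf
    have h4 : Complex.sin (q * θ) + Complex.sin θ * Complex.exp (θ * Complex.I) *
          Complex.exp (q * θ * Complex.I) =
        (Complex.sin (q * θ) * Complex.cos θ + Complex.cos (q * θ) * Complex.sin θ) *
          Complex.exp (θ * Complex.I) := by
      rw [Complex.exp_mul_I, Complex.exp_mul_I]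
      linear_combination (-Complex.sin (q * θ)) * Complex.sin_sq_add_cos_sq (θ : ℂ) +
        Complex.sin θ ^ 2 * Complex.sin (q * θ) * Complex.I_sq
    rw [h1, h2, h3]
    push_cast
    linear_combination Complex.exp (q * θ * Complex.I) * h4

theorem Dker_mul_exp (q : ℕ) {θ : ℝ} (h0 : 0 ≤ θ) (h1 : θ < π) :
    (Dker q θ : ℂ) * Complex.exp (((q : ℝ) - 1 : ℝ) * θ * Complex.I) =
      ∑ i ∈ Finset.range q, Complex.exp (2 * θ * Complex.I) ^ i := by
  rcases h0.eq_or_lt with rfl | h0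
  · simp [Dker]
  · have hs : (Real.sin θ : ℂ) ≠ 0 := by
      exact_mod_cast (Real.sin_pos_of_pos_of_lt_pi h0 h1).ne'
    refine mul_left_cancel₀ (mul_ne_zero hs (Complex.exp_ne_zero (θ * Complex.I))) ?_
    rw [sin_mul_geom_sum_exp]
    have h2 : Complex.exp (q * θ * Complex.I) =
        Complex.exp (((q : ℝ) - 1 : ℝ) * θ * Complex.I) * Complex.exp (θ * Complex.I) := by
      rw [← Complex.exp_add]; push_cast; ring_nf
    rw [h2, Dker, if_neg h0.ne', Complex.ofReal_div]
    field_simp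

theorem Dker_pow_mul_cos (n q k : ℕ) {θ : ℝ} (h0 : 0 ≤ θ) (h1 : θ < π) :
    Dker q θ ^ n * Real.cos ((((q : ℝ) - 1) * n - 2 * k) * θ) =
      ((∑ i ∈ Finset.range q, Polynomial.X ^ i : Polynomial ℕ) ^ n).sum
        fun j a => (a : ℝ) * Real.cos (2 * ((j : ℝ) - k) * θ) := by
  have h := congrArg (· ^ n) (Dker_mul_exp q h0 h1)
  have hP : (∑ i ∈ Finset.range q, Complex.exp (2 * θ * Complex.I) ^ i) ^ n =
      ((∑ i ∈ Finset.range q, Polynomial.X ^ i : Polynomial ℕ) ^ n).sum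
        fun j a => (a : ℂ) * Complex.exp (2 * θ * Complex.I) ^ j := by
    trans Polynomial.eval₂ (Nat.castRingHom ℂ) (Complex.exp (2 * θ * Complex.I))
      ((∑ i ∈ Finset.range q, Polynomial.X ^ i : Polynomial ℕ) ^ n)
    · simp [Polynomial.eval₂_pow, Polynomial.eval₂_finsetSum]
    · simp [Polynomial.eval₂_eq_sum]
  beta_reduce at h
  simp only [hP] at h
  simp only [mul_pow, ← Complex.exp_nat_mul] at h
  have hshift := congrArg (fun z => (z * Complex.exp (-(2 * k * θ) * Complex.I)).re) h
  simp only [mul_assoc, ← Complex.exp_add, Polynomial.sum, Finset.sum_mul, Complex.re_sum]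
    at hshift
  rw [Polynomial.sum]
  convert hshift using 1
  · rw [← Complex.ofReal_pow, Complex.re_ofReal_mul, ← Complex.exp_ofReal_mul_I_re]
    push_cast
    ring_nf
  · refine Finset.sum_congr rfl fun j _ => ?_
    rw [← Complex.ofReal_natCast, Complex.re_ofReal_mul, ← Complex.exp_ofReal_mul_I_re]
    push_cast
    ring_nf

theorem integral_cos_two_mul_int (m : ℤ) :
    ∫ θ in (0 : ℝ)..(π / 2), Real.cos (2 * (m : ℝ) * θ) = if m = 0 then π / 2 else 0 := by
  split_ifs with hm
  · simp [hm]
  · have hm' : (2 * (m : ℝ)) ≠ 0 := by positivity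
    rw [intervalIntegral.integral_comp_mul_left _ hm', integral_cos,
      show 2 * (m : ℝ) * (π / 2) = m * π by ring, Real.sin_int_mul_pi]
    simp

theorem polyCoeff_integral_repr (n q k : ℕ) (hn : 0 < n) (hq : 0 < q)
    (hk : k ≤ (q - 1) * n) :
    (polyCoeff n q k : ℝ) =
      (2 / Real.pi) *
        ∫ θ in (0 : ℝ)..(Real.pi / 2),
          (Dker q θ) ^ n * Real.cos ((((q : ℝ) - 1) * n - 2 * k) * θ) := by
  have hint (j : ℕ) : ∫ θ in (0 : ℝ)..(π / 2), Real.cos (2 * ((j : ℝ) - k) * θ) =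
      if j = k then π / 2 else 0 := by
    simpa [sub_eq_zero] using integral_cos_two_mul_int ((j : ℤ) - k)
  rw [intervalIntegral.integral_congr (g := fun θ =>
    ((∑ i ∈ Finset.range q, Polynomial.X ^ i : Polynomial ℕ) ^ n).sum
      fun j a => (a : ℝ) * Real.cos (2 * ((j : ℝ) - k) * θ))]
  · simp only [Polynomial.sum]
    rw [intervalIntegral.integral_finsetSum fun j _ =>
      Continuous.intervalIntegrable (by fun_prop) _ _]
    simp only [intervalIntegral.integral_const_mul, hint, mul_ite, mul_zero, Finset.sum_ite_eq']
    rw [polyCoeff]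
    split_ifs with hmem
    · field_simp
    · simp [Polynomial.notMem_support_iff.mp hmem]
  · intro θ hθ
    rw [Set.uIcc_of_le (by positivity)] at hθ
    exact Dker_pow_mul_cos n q k hθ.1 (by linarith [hθ.2, Real.pi_pos])
end

section
/- For all positive integers n, q, the finite sequence k \mapsto C(n,q,k), 0 \le k \le (q-1)n, is symmetric and unimodal with maximum at the middle: C(n,q,k) = C(n,q,(q-1)n-k) for all 0 \le k \le (q-1)n, and C(n,q,k) \le C(n,q,l) whenever k \le l and 2l \le (q-1)n. In particular the maximum is attained at k = (q-1)n/2 when (q-1)n is even and at k = ((q-1)n-1)/2 (equivalently ((q-1)n+1)/2) when (q-1)n is odd. -/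
open Polynomial in
theorem coeff_sum_range_X_pow (q k : ℕ) :
    (∑ i ∈ Finset.range q, X ^ i : ℕ[X]).coeff k = if k < q then 1 else 0 := by
  simp [coeff_X_pow]

open Polynomial in
theorem natDegree_sum_range_X_pow_le (m : ℕ) :
    (∑ i ∈ Finset.range (m + 1), X ^ i : ℕ[X]).natDegree ≤ m := by
  rw [natDegree_le_iff_coeff_eq_zero]
  intro k hk
  rw [coeff_sum_range_X_pow, if_neg (by omega)]

open Polynomial in
theorem reflect_sum_range_X_pow (m : ℕ) :
    reflect m (∑ i ∈ Finset.range (m + 1), X ^ i : ℕ[X]) =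
      ∑ i ∈ Finset.range (m + 1), X ^ i := by
  ext k
  rw [coeff_reflect, coeff_sum_range_X_pow, coeff_sum_range_X_pow]
  rcases le_or_gt k m with h | h
  · rw [revAt_le h, if_pos (by omega), if_pos (by omega)]
  · rw [revAt_eq_self_of_lt h]

open Polynomial in
theorem reflect_sum_range_X_pow_pow (m n : ℕ) :
    reflect (m * n) ((∑ i ∈ Finset.range (m + 1), X ^ i : ℕ[X]) ^ n) =
      (∑ i ∈ Finset.range (m + 1), X ^ i) ^ n := by
  induction n with
  | zero => simp
  | succ n ih =>
    have hdeg : ((∑ i ∈ Finset.range (m + 1), X ^ i : ℕ[X]) ^ n).natDegree ≤ m * n := by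
      rw [mul_comm]
      exact natDegree_pow_le_of_le n (natDegree_sum_range_X_pow_le m)
    rw [pow_succ, Nat.mul_succ, reflect_mul _ _ hdeg (natDegree_sum_range_X_pow_le m), ih,
      reflect_sum_range_X_pow]

theorem polyCoeff_symm (m n k : ℕ) (hk : k ≤ m * n) :
    polyCoeff n (m + 1) k = polyCoeff n (m + 1) (m * n - k) := by
  unfold polyCoeff
  conv_lhs => rw [← reflect_sum_range_X_pow_pow]
  rw [Polynomial.coeff_reflect, Polynomial.revAt_le hk]

/-- Coefficient form of `P ^ (n + 1) * X + P ^ n = P ^ (n + 1) + P ^ n * X ^ (m + 1)`, where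
`P = 1 + X + ⋯ + X ^ m`. -/
theorem polyCoeff_succ_add (m n k : ℕ) :
    polyCoeff (n + 1) (m + 1) k + polyCoeff n (m + 1) (k + 1) =
      polyCoeff (n + 1) (m + 1) (k + 1) +
        if m ≤ k then polyCoeff n (m + 1) (k - m) else 0 := by
  unfold polyCoeff
  set P : Polynomial ℕ := ∑ i ∈ Finset.range (m + 1), Polynomial.X ^ i with hP
  have hgeom : P * Polynomial.X + 1 = P + Polynomial.X ^ (m + 1) := by
    rw [hP, ← Finset.sum_range_succ, Finset.sum_range_succ' _ (m + 1), Finset.sum_mul]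
    simp [pow_succ]
  have h : P ^ (n + 1) * Polynomial.X + P ^ n = P ^ (n + 1) + P ^ n * Polynomial.X ^ (m + 1) := by
    calc _ = P ^ n * (P * Polynomial.X + 1) := by ring
      _ = _ := by rw [hgeom]; ring
  have hcoeff := congrArg (fun p => p.coeff (k + 1)) h
  simpa [Polynomial.coeff_mul_X_pow'] using hcoeff

theorem polyCoeff_le_of_le (m n k l : ℕ) (hkl : k ≤ l) (hl : 2 * l ≤ m * n) :
    polyCoeff n (m + 1) k ≤ polyCoeff n (m + 1) l := by
  induction n generalizing k l with
  | zero =>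
    obtain rfl : k = l := by omega
    exact le_rfl
  | succ n ih =>
    induction l, hkl using Nat.le_induction with
    | base => exact le_rfl
    | succ l _ ihl =>
      refine (ihl (by omega)).trans ?_
      have hrec := polyCoeff_succ_add m n l
      rw [Nat.mul_succ m] at hl
      split_ifs at hrec with hml
      · have : polyCoeff n (m + 1) (l - m) ≤ polyCoeff n (m + 1) (l + 1) := by
          rcases le_or_gt (2 * (l + 1)) (m * n) with h | h
          · exact ih _ _ (by omega) h
          · rw [polyCoeff_symm m n (l + 1) (by omega)]
            exact ih _ _ (by omega) (by omega)
        omega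
      · omega

theorem polyCoeff_symmetric_unimodal (n q : ℕ) (hn : 0 < n) (hq : 0 < q) :
    (∀ k ≤ (q - 1) * n, polyCoeff n q k = polyCoeff n q ((q - 1) * n - k)) ∧
    (∀ k l : ℕ, k ≤ l → 2 * l ≤ (q - 1) * n → polyCoeff n q k ≤ polyCoeff n q l) ∧
    (∀ k ≤ (q - 1) * n, polyCoeff n q k ≤ polyCoeff n q ((q - 1) * n / 2)) := by
  obtain ⟨m, rfl⟩ := Nat.exists_eq_add_of_lt hq
  simp only [zero_add, Nat.add_sub_cancel]
  refine ⟨polyCoeff_symm m n, polyCoeff_le_of_le m n, fun k hk => ?_⟩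
  rcases le_or_gt k (m * n / 2) with h | h
  · exact polyCoeff_le_of_le m n _ _ h (by omega)
  · rw [polyCoeff_symm m n k hk]
    exact polyCoeff_le_of_le m n _ _ (by omega) (by omega)
end

section
/- Let m, s be natural numbers and let a, b : \mathbb{N} \to \mathbb{R} be nonnegative sequences supported on {0,...,m} and {0,...,s} respectively, each symmetric (a_i = a_{m-i} for 0 \le i \le m, b_j = b_{s-j} for 0 \le j \le s) and unimodal (a_i \le a_j whenever i \le j and 2j \le m, and similarly for b). Then their convolution c_k = \sum_{i} a_i b_{k-i} is symmetric on {0,...,m+s} (c_k = c_{m+s-k}) and unimodal (c_k \le c_l whenever k \le l and 2l \le m+s). -/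
/-- Extension of a sequence on `ℕ` by zero to `ℤ`. -/
def intExtend (a : ℕ → ℝ) (i : ℤ) : ℝ := if 0 ≤ i then a i.toNat else 0

theorem intExtend_natCast (a : ℕ → ℝ) (n : ℕ) : intExtend a n = a n := by
  simp [intExtend]

theorem intExtend_of_neg (a : ℕ → ℝ) {i : ℤ} (hi : i < 0) : intExtend a i = 0 := by
  simp [intExtend, hi]

theorem intExtend_nonneg {a : ℕ → ℝ} (ha0 : ∀ i, 0 ≤ a i) (i : ℤ) : 0 ≤ intExtend a i := by
  unfold intExtend
  split_ifs
  exacts [ha0 _, le_rfl]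

theorem intExtend_reflect {m : ℕ} {a : ℕ → ℝ} (haSupp : ∀ i, m < i → a i = 0)
    (haSym : ∀ i ≤ m, a i = a (m - i)) (i : ℤ) : intExtend a (m - i) = intExtend a i := by
  rcases lt_or_ge i 0 with hi | hi
  · obtain ⟨n, hn⟩ := Int.eq_ofNat_of_zero_le (show 0 ≤ (m : ℤ) - i by omega)
    rw [intExtend_of_neg a hi, hn, intExtend_natCast]
    exact haSupp n (by omega)
  · lift i to ℕ using hi
    rw [intExtend_natCast]
    rcases le_or_gt i m with him | him
    · rw [← Nat.cast_sub him, intExtend_natCast, ← haSym i him]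
    · rw [intExtend_of_neg a (by omega), haSupp i him]

theorem intExtend_le_of_add_le {m : ℕ} {a : ℕ → ℝ} (ha0 : ∀ i, 0 ≤ a i)
    (haSym : ∀ i ≤ m, a i = a (m - i))
    (haMono : ∀ i j : ℕ, i ≤ j → 2 * j ≤ m → a i ≤ a j) {x y : ℤ} (hxy : x ≤ y)
    (hm : x + y ≤ m) : intExtend a x ≤ intExtend a y := by
  rcases lt_or_ge x 0 with hx | hx
  · rw [intExtend_of_neg a hx]
    exact intExtend_nonneg ha0 y
  lift x to ℕ using hx
  lift y to ℕ using by omega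
  rcases le_or_gt (2 * y) m with hy | hy
  · simpa only [intExtend_natCast] using haMono x y (by omega) hy
  · simp only [intExtend_natCast]
    rw [haSym y (by omega)]
    exact haMono _ _ (by omega) (by omega)

theorem sum_Icc_int_reflect (L R : ℤ) (f : ℤ → ℝ) :
    ∑ i ∈ Finset.Icc L R, f (L + R - i) = ∑ i ∈ Finset.Icc L R, f i := by
  refine Finset.sum_nbij' (fun i => L + R - i) (fun i => L + R - i) ?_ ?_ ?_ ?_ ?_ <;>
    intro i hi <;> simp only [Finset.mem_Icc] at * <;> omega

theorem sum_range_conv_eq_sum_Icc (a b : ℕ → ℝ) (k : ℕ) {L R : ℤ} (hL : L ≤ 0) (hR : k ≤ R) :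
    ∑ i ∈ Finset.range (k + 1), a i * b (k - i) =
      ∑ i ∈ Finset.Icc L R, intExtend a i * intExtend b (k - i) := by
  refine Finset.sum_of_injOn (fun i : ℕ => (i : ℤ)) (fun _ _ _ _ h => Nat.cast_injective h)
    ?_ ?_ ?_
  · intro i hi
    simp only [Finset.coe_range, Set.mem_Iio, Finset.coe_Icc, Set.mem_Icc] at *
    omega
  · intro i _ hi
    rcases lt_or_ge i 0 with h0 | h0
    · rw [intExtend_of_neg a h0, zero_mul]
    · lift i to ℕ using h0
      have hk : ¬ i < k + 1 := fun h => hi ⟨i, by simpa using h, rfl⟩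
      rw [intExtend_of_neg b (by omega), mul_zero]
  · intro i hi
    have hik : i ≤ k := by simpa [Nat.lt_succ_iff] using hi
    simp only [← Nat.cast_sub hik, intExtend_natCast]

theorem conv_le_conv_succ {m s : ℕ} {a b : ℕ → ℝ}
    (ha0 : ∀ i, 0 ≤ a i) (hb0 : ∀ j, 0 ≤ b j)
    (hbSupp : ∀ j, s < j → b j = 0)
    (haSym : ∀ i ≤ m, a i = a (m - i)) (hbSym : ∀ j ≤ s, b j = b (s - j))
    (haMono : ∀ i j : ℕ, i ≤ j → 2 * j ≤ m → a i ≤ a j)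
    (hbMono : ∀ i j : ℕ, i ≤ j → 2 * j ≤ s → b i ≤ b j) {k : ℕ} (hk : 2 * (k + 1) ≤ m + s) :
    ∑ i ∈ Finset.range (k + 1), a i * b (k - i) ≤
      ∑ i ∈ Finset.range (k + 1 + 1), a i * b (k + 1 - i) := by
  set L : ℤ := -s with hL
  set R : ℤ := 2 * k + 1 with hR
  rw [sum_range_conv_eq_sum_Icc a b k (L := L) (R := R) (by omega) (by omega),
    sum_range_conv_eq_sum_Icc a b (k + 1) (L := L) (R := R) (by omega) (by omega),
    ← sub_nonneg, ← Finset.sum_sub_distrib]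
  set f : ℤ → ℝ := fun i => intExtend a i * intExtend b ((k + 1 : ℕ) - i) -
    intExtend a i * intExtend b (k - i) with hf
  -- The increments of `b` are antisymmetric, so pairing `i` with `L + R - i` yields a sum of
  -- products of factors of equal sign.
  have pair_nonneg (i : ℤ) : 0 ≤ f i + f (L + R - i) := by
    have e₁ : intExtend b ((k + 1 : ℕ) - (L + R - i)) = intExtend b (k - i) := by
      rw [← intExtend_reflect hbSupp hbSym]
      congr 1
      push_cast
      omega
    have e₂ : intExtend b (k - (L + R - i)) = intExtend b ((k + 1 : ℕ) - i) := by
      rw [← intExtend_reflect hbSupp hbSym]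
      congr 1
      push_cast
      omega
    have e : f i + f (L + R - i) = (intExtend a i - intExtend a (L + R - i)) *
        (intExtend b ((k + 1 : ℕ) - i) - intExtend b (k - i)) := by
      simp only [hf, e₁, e₂]
      ring
    rw [e]
    rcases le_total (L + R - i) i with h | h
    · refine mul_nonneg (sub_nonneg.2 ?_) (sub_nonneg.2 ?_)
      · exact intExtend_le_of_add_le ha0 haSym haMono h (by omega)
      · exact intExtend_le_of_add_le hb0 hbSym hbMono (by omega) (by omega)
    · refine mul_nonneg_of_nonpos_of_nonpos (sub_nonpos.2 ?_) (sub_nonpos.2 ?_)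
      · exact intExtend_le_of_add_le ha0 haSym haMono h (by omega)
      · rw [← e₁, ← e₂]
        exact intExtend_le_of_add_le hb0 hbSym hbMono (by omega) (by omega)
  have hsum := Finset.sum_nonneg fun i (_ : i ∈ Finset.Icc L R) => pair_nonneg i
  rw [Finset.sum_add_distrib, sum_Icc_int_reflect L R f] at hsum
  linarith

theorem convolution_symmetric_unimodal (m s : ℕ) (a b : ℕ → ℝ)
    (ha0 : ∀ i, 0 ≤ a i) (hb0 : ∀ j, 0 ≤ b j)
    (haSupp : ∀ i, m < i → a i = 0) (hbSupp : ∀ j, s < j → b j = 0)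
    (haSym : ∀ i ≤ m, a i = a (m - i)) (hbSym : ∀ j ≤ s, b j = b (s - j))
    (haMono : ∀ i j : ℕ, i ≤ j → 2 * j ≤ m → a i ≤ a j)
    (hbMono : ∀ i j : ℕ, i ≤ j → 2 * j ≤ s → b i ≤ b j) :
    (∀ k ≤ m + s,
        (∑ i ∈ Finset.range (k + 1), a i * b (k - i)) =
          ∑ i ∈ Finset.range ((m + s - k) + 1), a i * b ((m + s - k) - i)) ∧
    (∀ k l : ℕ, k ≤ l → 2 * l ≤ m + s →
        (∑ i ∈ Finset.range (k + 1), a i * b (k - i)) ≤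
          ∑ i ∈ Finset.range (l + 1), a i * b (l - i)) := by
  refine ⟨fun k hk => ?_, fun k l hkl => ?_⟩
  · rw [sum_range_conv_eq_sum_Icc a b k (L := -s) (R := m + s) (by omega) (by omega),
      sum_range_conv_eq_sum_Icc a b (m + s - k) (L := -s) (R := m + s) (by omega) (by omega),
      ← sum_Icc_int_reflect]
    refine Finset.sum_congr rfl fun i _ => ?_
    rw [← intExtend_reflect haSupp haSym i, ← intExtend_reflect hbSupp hbSym (_ - i)]
    congr 2 <;> omega
  · induction l, hkl using Nat.le_induction with
    | base => exact fun _ => le_rfl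
    | succ l _ ih =>
      exact fun hl => (ih (by omega)).trans
        (conv_le_conv_succ ha0 hb0 hbSupp haSym hbSym haMono hbMono hl)
end

section
/- Let q \ge 4 be an integer and let f(x) = (q-2)x^{q+1} - (q-1)x^q + 2x - 1. Then f has exactly two distinct positive real roots: the trivial root x = 1, and a second root r lying in (0,1) which satisfies |r - 1/2 - q/2^{q+2}| \le q^3/2^{2q}. -/
/-- The quotient of `(q-2)x^{q+1} - (q-1)x^q + 2x - 1` by `(x-1)^2`. -/
def saddleQuotient (q : ℕ) (x : ℝ) : ℝ := ∑ k ∈ Finset.range q, ((k : ℝ) - 1) * x ^ k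

theorem saddle_eq_sq_mul_saddleQuotient (q : ℕ) (x : ℝ) :
    ((q : ℝ) - 2) * x ^ (q + 1) - ((q : ℝ) - 1) * x ^ q + 2 * x - 1 =
      (x - 1) ^ 2 * saddleQuotient q x := by
  unfold saddleQuotient
  induction q with
  | zero => simp
  | succ n ih =>
    rw [Finset.sum_range_succ, mul_add, ← ih]
    push_cast
    ring

theorem saddleQuotient_strictMonoOn {q : ℕ} (hq : 3 ≤ q) :
    StrictMonoOn (saddleQuotient q) (Set.Ici 0) := by
  intro a ha b _ hab
  have ha' : 0 ≤ a := ha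
  refine Finset.sum_lt_sum (fun k _ => ?_) ⟨2, Finset.mem_range.2 hq, ?_⟩
  · rcases Nat.eq_zero_or_pos k with rfl | hk
    · simp
    · have hk' : (1 : ℝ) ≤ k := by exact_mod_cast hk
      exact mul_le_mul_of_nonneg_left (pow_le_pow_left₀ ha' hab.le k) (by linarith)
  · norm_num
    exact pow_lt_pow_left₀ hab ha' two_ne_zero

theorem continuous_saddleQuotient (q : ℕ) : Continuous (saddleQuotient q) := by
  unfold saddleQuotient
  fun_prop

theorem saddleQuotient_one_pos {q : ℕ} (hq : 4 ≤ q) : 0 < saddleQuotient q 1 := by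
  induction q, hq using Nat.le_induction with
  | base => norm_num [saddleQuotient, Finset.sum_range_succ]
  | succ n hn ih =>
    have hn' : (4 : ℝ) ≤ n := by exact_mod_cast hn
    unfold saddleQuotient at ih ⊢
    rw [Finset.sum_range_succ, one_pow, mul_one]
    linarith

/-- The saddle polynomial in the variable `t = 2x - 1`. -/
theorem two_pow_mul_saddle (q : ℕ) (t : ℝ) :
    2 * 2 ^ q * (((1 + t) / 2 - 1) ^ 2 * saddleQuotient q ((1 + t) / 2)) =
      2 * t * 2 ^ q - (1 + t) ^ q * (q - (q - 2) * t) := by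
  rw [← saddle_eq_sq_mul_saddleQuotient, pow_succ, div_pow]
  field_simp
  ring

theorem one_add_pow_mul_one_sub_le_one {q : ℕ} {t : ℝ} (h0 : 0 ≤ t) (h1 : t ≤ 1) :
    (1 + t) ^ q * (1 - q * t) ≤ 1 := by
  have hb := one_add_mul_le_pow (a := -t) (by linarith) q
  calc (1 + t) ^ q * (1 - q * t) ≤ (1 + t) ^ q * (1 + -t) ^ q :=
        mul_le_mul_of_nonneg_left (by linarith) (by positivity)
    _ = (1 - t ^ 2) ^ q := by rw [← mul_pow]; ring
    _ ≤ 1 := pow_le_one₀ (by nlinarith) (by nlinarith)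

theorem two_mul_sq_le_two_pow {q : ℕ} (hq : 7 ≤ q) : 2 * q ^ 2 ≤ 2 ^ q := by
  induction q, hq using Nat.le_induction with
  | base => norm_num
  | succ n hn ih =>
    rw [pow_succ 2 n]
    nlinarith

theorem saddleQuotient_nonneg_of_seven_le {q : ℕ} (hq : 7 ≤ q) :
    0 ≤ saddleQuotient q ((1 + 1 / (2 * q)) / 2) := by
  have hq' : (7 : ℝ) ≤ q := by exact_mod_cast hq
  have hT : 2 * (q : ℝ) ^ 2 ≤ 2 ^ q := by exact_mod_cast two_mul_sq_le_two_pow hq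
  set t : ℝ := 1 / (2 * q) with ht
  have hqt : q * t = 1 / 2 := by rw [ht]; field_simp
  have ht0 : 0 < t := by positivity
  have ht1 : t ≤ 1 := by nlinarith
  have hP := one_add_pow_mul_one_sub_le_one (q := q) ht0.le ht1
  rw [hqt] at hP
  have key := two_pow_mul_saddle q t
  have h1 : (1 + t) ^ q * (q - (q - 2) * t) ≤ 2 * q :=
    mul_le_mul (by linarith) (by nlinarith) (by nlinarith) (by norm_num)
  have h2 : 2 * t * (2 * (q : ℝ) ^ 2) ≤ 2 * t * 2 ^ q :=
    mul_le_mul_of_nonneg_left hT (by positivity)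
  have h3 : 2 * t * (2 * (q : ℝ) ^ 2) = 2 * q := by
    linear_combination 4 * (q : ℝ) * hqt
  have h4 : 0 < 2 * (2 : ℝ) ^ q * ((1 + t) / 2 - 1) ^ 2 := by
    have : (1 + t) / 2 - 1 ≠ 0 := by nlinarith
    positivity
  refine nonneg_of_mul_nonneg_right (a := 2 * (2 : ℝ) ^ q * ((1 + t) / 2 - 1) ^ 2) ?_ h4
  rw [mul_assoc, key]
  linarith

theorem saddleQuotient_half_neg {q : ℕ} (hq : 1 ≤ q) : saddleQuotient q (1 / 2) < 0 := by
  have key := two_pow_mul_saddle q 0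
  have hq' : (1 : ℝ) ≤ q := by exact_mod_cast hq
  norm_num at key
  have hT : (0 : ℝ) < 2 ^ q := by positivity
  by_contra! h
  have := mul_nonneg hT.le h
  linarith

theorem saddle_root_le {q : ℕ} (hq : 4 ≤ q) {r : ℝ} (hr : 1 / 2 < r) (hr1 : r < 1)
    (hroot : saddleQuotient q r = 0) :
    r ≤ 1 / 2 + (q : ℝ) / 2 ^ (q + 2) + (q : ℝ) ^ 3 / 2 ^ (2 * q) := by
  have le_of_nonneg : ∀ x : ℝ, 0 ≤ x → 0 ≤ saddleQuotient q x → r ≤ x := fun x hx h => by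
    rw [← hroot] at h
    exact ((saddleQuotient_strictMonoOn (by omega)).le_iff_le
      (Set.mem_Ici.2 (by linarith)) (Set.mem_Ici.2 hx)).1 h
  rcases Nat.lt_or_ge q 7 with h7 | h7
  · apply le_of_nonneg _ (by positivity)
    interval_cases q <;> norm_num [saddleQuotient, Finset.sum_range_succ]
  · have hq' : (7 : ℝ) ≤ q := by exact_mod_cast h7
    obtain ⟨t, rfl⟩ : ∃ t, r = (1 + t) / 2 := ⟨2 * r - 1, by ring⟩
    have ht0 : 0 < t := by linarith
    have ht1 : t < 1 := by linarith
    have hle := le_of_nonneg _ (by positivity) (saddleQuotient_nonneg_of_seven_le h7)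
    have hqt : q * t ≤ 1 / 2 := by
      have h : t ≤ 1 / (2 * q) := by linarith
      calc q * t ≤ q * (1 / (2 * q)) := mul_le_mul_of_nonneg_left h (by positivity)
        _ = 1 / 2 := by field_simp
    have hP := one_add_pow_mul_one_sub_le_one (q := q) ht0.le ht1.le
    have key := two_pow_mul_saddle q t
    rw [hroot, mul_zero, mul_zero] at key
    have hqt0 : 0 < q * t := by positivity
    have hPpos : 0 < (1 + t) ^ q := by positivity
    have hTpos : (0 : ℝ) < 2 ^ q := by positivity
    rw [pow_add, mul_comm 2 q, pow_mul]
    generalize (1 + t) ^ q = P at *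
    generalize (2 : ℝ) ^ q = T at *
    have hP1 : P ≤ 1 + 2 * (q * t) := by
      by_contra! h
      have := mul_lt_mul_of_pos_right h (show 0 < 1 - q * t by linarith)
      nlinarith
    have hPq : P * (q - (q - 2) * t) ≤ P * q :=
      mul_le_mul_of_nonneg_left (by nlinarith) hPpos.le
    have hPq' : P * q ≤ (1 + 2 * (q * t)) * q := mul_le_mul_of_nonneg_right hP1 (by linarith)
    have htT : t * T ≤ q := by nlinarith
    have hfin : T * (2 * t * T - q) ≤ 4 * (q : ℝ) ^ 3 := by
      calc T * (2 * t * T - q) ≤ T * (2 * q ^ 2 * t) :=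
            mul_le_mul_of_nonneg_left (by linarith) hTpos.le
        _ = 2 * q ^ 2 * (t * T) := by ring
        _ ≤ 2 * q ^ 2 * q := mul_le_mul_of_nonneg_left htT (by positivity)
        _ ≤ 4 * (q : ℝ) ^ 3 := by
            have : (0 : ℝ) ≤ (q : ℝ) ^ 3 := by positivity
            linarith
    have hdiff : (1 / 2 + (q : ℝ) / (T * 2 ^ 2) + (q : ℝ) ^ 3 / T ^ 2) - (1 + t) / 2 =
        (4 * (q : ℝ) ^ 3 - T * (2 * t * T - q)) / (4 * T ^ 2) := by
      field_simp
      ring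
    rw [← sub_nonneg, hdiff]
    exact div_nonneg (by linarith) (by positivity)

theorem le_saddle_root {q : ℕ} (hq : 4 ≤ q) {r : ℝ} (hr : 1 / 2 < r) (hr1 : r < 1)
    (hroot : saddleQuotient q r = 0) :
    1 / 2 + (q : ℝ) / 2 ^ (q + 2) ≤ r := by
  have hq' : (4 : ℝ) ≤ q := by exact_mod_cast hq
  obtain ⟨t, rfl⟩ : ∃ t, r = (1 + t) / 2 := ⟨2 * r - 1, by ring⟩
  have ht0 : 0 < t := by linarith
  have ht1 : t < 1 := by linarith
  have key := two_pow_mul_saddle q t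
  rw [hroot, mul_zero, mul_zero] at key
  have hP := one_add_mul_le_pow (a := t) (by linarith) q
  have h1 : (1 + q * t) * (q - (q - 2) * t) ≤ (1 + t) ^ q * (q - (q - 2) * t) :=
    mul_le_mul_of_nonneg_right hP (by nlinarith)
  have h2 : (q : ℝ) ≤ (1 + q * t) * (q - (q - 2) * t) := by
    have h3 : 0 ≤ t * (q * (q - 2) * (1 - t) + (q + 2)) := by
      have : 0 ≤ (q : ℝ) - 2 := by linarith
      have : 0 ≤ 1 - t := by linarith
      positivity
    linarith
  have hdiff : (1 + t) / 2 - (1 / 2 + (q : ℝ) / 2 ^ (q + 2)) =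
      (2 * t * 2 ^ q - q) / (4 * 2 ^ q) := by
    rw [pow_add]
    field_simp
    ring
  rw [← sub_nonneg, hdiff]
  exact div_nonneg (by linarith) (by positivity)

theorem saddle_polynomial_roots (q : ℕ) (hq : 4 ≤ q) :
    ∃ r : ℝ, 0 < r ∧ r < 1 ∧
      ((q : ℝ) - 2) * r ^ (q + 1) - ((q : ℝ) - 1) * r ^ q + 2 * r - 1 = 0 ∧
      |r - 1 / 2 - (q : ℝ) / 2 ^ (q + 2)| ≤ (q : ℝ) ^ 3 / 2 ^ (2 * q) ∧
      (((q : ℝ) - 2) * 1 ^ (q + 1) - ((q : ℝ) - 1) * 1 ^ q + 2 * 1 - 1 = 0) ∧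
      ∀ x : ℝ, 0 < x →
        ((q : ℝ) - 2) * x ^ (q + 1) - ((q : ℝ) - 1) * x ^ q + 2 * x - 1 = 0 →
        x = 1 ∨ x = r := by
  obtain ⟨r, ⟨hr, hr1⟩, hroot⟩ := intermediate_value_Ioo (by norm_num : (1 / 2 : ℝ) ≤ 1)
    (continuous_saddleQuotient q).continuousOn
    ⟨saddleQuotient_half_neg (by omega), saddleQuotient_one_pos hq⟩
  refine ⟨r, by linarith, hr1, ?_, ?_, ?_, fun x hx h => ?_⟩
  · rw [saddle_eq_sq_mul_saddleQuotient, hroot, mul_zero]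
  · have hlow := le_saddle_root hq hr hr1 hroot
    have hupp := saddle_root_le hq hr hr1 hroot
    rw [abs_of_nonneg (by linarith)]
    linarith
  · rw [saddle_eq_sq_mul_saddleQuotient]
    simp
  · rw [saddle_eq_sq_mul_saddleQuotient] at h
    rcases mul_eq_zero.1 h with h | h
    · exact Or.inl (sub_eq_zero.1 (pow_eq_zero_iff two_ne_zero |>.1 h))
    · exact Or.inr ((saddleQuotient_strictMonoOn (by omega)).injOn hx.le
        (Set.mem_Ici.2 (by linarith)) (h.trans hroot.symm))
end

section
/- Let q \ge 4 be an integer, let r be the unique real number in (0,1) satisfying (q-2)r^{q+1} - (q-1)r^q + 2r - 1 = 0, and set \varphi(r) = ( r/(1-r)^2 - q^2 r^q/(1-r^q)^2 )^{-1/2}. Then C(n,q,n) \sim (\varphi(r)/\sqrt{2\pi n}) \cdot ((1-r^q)/(r-r^2))^n as n \to \infty; that is, the limit as n \to \infty of C(n,q,n) \cdot \sqrt{2\pi n} \cdot ((r-r^2)/(1-r^q))^n / \varphi(r) equals 1. -/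
open Filter

theorem tendsto_sqrt_mul_integral_pow {f : ℝ → ℂ} (hf : Continuous f) {c V : ℝ} (hc : 0 < c)
    (hbound : ∀ t : ℝ, |t| ≤ Real.pi → ‖f t‖ ≤ Real.exp (-c * t ^ 2))
    (hlim : ∀ u : ℝ, Tendsto (fun n : ℕ => f (u / √n) ^ n) atTop
      (nhds (Real.exp (-(V / 2) * u ^ 2) : ℂ))) :
    Tendsto (fun n : ℕ => (√n : ℂ) * ∫ t in -Real.pi..Real.pi, f t ^ n) atTop
      (nhds (√(2 * Real.pi / V) : ℂ)) := by
  have hlimit : (√(2 * Real.pi / V) : ℂ) =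
      ∫ u : ℝ, (Real.exp (-(V / 2) * u ^ 2) : ℂ) := by
    rw [integral_complex_ofReal, integral_gaussian]
    rw [div_div_eq_mul_div, mul_comm]
  rw [hlimit]
  have hmain : Tendsto (fun n : ℕ => ∫ u : ℝ,
      (Set.Ioc (-(√n * Real.pi)) (√n * Real.pi)).indicator (fun u => f (u / √n) ^ n) u) atTop
      (nhds (∫ u : ℝ, (Real.exp (-(V / 2) * u ^ 2) : ℂ))) := by
    refine MeasureTheory.tendsto_integral_filter_of_dominated_convergence
      (fun u => Real.exp (-c * u ^ 2)) ?_ ?_ (integrable_exp_neg_mul_sq hc) ?_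
    · refine Eventually.of_forall fun n => ?_
      exact ((by fun_prop : Continuous fun u : ℝ => f (u / √n) ^ n).aestronglyMeasurable).indicator
        measurableSet_Ioc
    · filter_upwards [eventually_gt_atTop 0] with n hn
      refine Eventually.of_forall fun u => ?_
      have hn' : (0 : ℝ) < n := by exact_mod_cast hn
      have hs : 0 < √(n : ℝ) := Real.sqrt_pos.2 hn'
      by_cases hu : u ∈ Set.Ioc (-(√n * Real.pi)) (√n * Real.pi)
      · rw [Set.indicator_of_mem hu, norm_pow]
        have hut : |u / √n| ≤ Real.pi := by
          rw [abs_div, abs_of_pos hs, div_le_iff₀ hs, mul_comm]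
          exact abs_le.2 ⟨hu.1.le, hu.2⟩
        refine (pow_le_pow_left₀ (norm_nonneg _) (hbound _ hut) n).trans_eq ?_
        rw [← Real.exp_nat_mul, div_pow, Real.sq_sqrt hn'.le]
        congr 1
        field_simp
      · rw [Set.indicator_of_notMem hu, norm_zero]
        positivity
    · refine Eventually.of_forall fun u => (hlim u).congr' ?_
      have hbig : ∀ᶠ n : ℕ in atTop, |u| < √n * Real.pi :=
        ((Real.tendsto_sqrt_atTop.comp tendsto_natCast_atTop_atTop).atTop_mul_const
          Real.pi_pos).eventually_gt_atTop |u|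
      filter_upwards [hbig] with n hn
      have hu : u ∈ Set.Ioc (-(√n * Real.pi)) (√n * Real.pi) :=
        ⟨(abs_lt.1 hn).1, (abs_lt.1 hn).2.le⟩
      rw [Set.indicator_of_mem hu]
  refine hmain.congr' ?_
  filter_upwards [eventually_gt_atTop 0] with n hn
  have hs : 0 < √(n : ℝ) := Real.sqrt_pos.2 (by exact_mod_cast hn)
  rw [MeasureTheory.integral_indicator measurableSet_Ioc,
    ← intervalIntegral.integral_of_le (by nlinarith [Real.pi_pos]),
    intervalIntegral.integral_comp_div (fun t => f t ^ n) hs.ne', Complex.real_smul]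
  congr 2 <;> field_simp

theorem tendsto_nat_mul_exp_sub_one_sub_id (a u : ℝ) :
    Tendsto (fun n : ℕ => (n : ℂ) * (Complex.exp ((a * (u / √n) : ℝ) * Complex.I) - 1 -
      (a * (u / √n) : ℝ) * Complex.I)) atTop (nhds (-(a ^ 2 * u ^ 2 / 2) : ℂ)) := by
  rw [tendsto_iff_norm_sub_tendsto_zero]
  have hinv : Tendsto (fun n : ℕ => (√(n : ℝ))⁻¹) atTop (nhds 0) :=
    tendsto_inv_atTop_zero.comp (Real.tendsto_sqrt_atTop.comp tendsto_natCast_atTop_atTop)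
  have hmaj : Tendsto (fun n : ℕ => |a * u| ^ 3 * (√(n : ℝ))⁻¹ *
      Real.exp (|a * u| * (√(n : ℝ))⁻¹)) atTop (nhds 0) := by
    simpa using (hinv.const_mul (|a * u| ^ 3)).mul
      ((Real.continuous_exp.tendsto _).comp (hinv.const_mul |a * u|))
  refine squeeze_zero' (Eventually.of_forall fun _ => norm_nonneg _) ?_ hmaj
  filter_upwards [eventually_gt_atTop 0] with n hn
  have hn' : (0 : ℝ) < n := by exact_mod_cast hn
  have hs : 0 < √(n : ℝ) := Real.sqrt_pos.2 hn'
  have hss : √(n : ℝ) ^ 2 = n := Real.sq_sqrt hn'.le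
  set z : ℂ := (a * (u / √n) : ℝ) * Complex.I with hz
  have hnorm : ‖z‖ = |a * u| * (√(n : ℝ))⁻¹ := by
    rw [hz, norm_mul, Complex.norm_I, mul_one, Complex.norm_real, Real.norm_eq_abs,
      ← mul_div_assoc, abs_div, abs_of_pos hs, div_eq_mul_inv]
  have hzsq : (n : ℂ) * (z ^ 2 / 2) = -(a ^ 2 * u ^ 2 / 2) := by
    have hreal : (n : ℝ) * (a * (u / √n)) ^ 2 = a ^ 2 * u ^ 2 := by
      rw [mul_pow, div_pow, hss]
      field_simp
    have hcomplex : (n : ℂ) * ((a * (u / √n) : ℝ) : ℂ) ^ 2 = a ^ 2 * u ^ 2 := by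
      exact_mod_cast hreal
    rw [hz, mul_pow, Complex.I_sq]
    linear_combination -hcomplex / 2
  have htaylor := Complex.norm_exp_sub_sum_le_norm_mul_exp z 3
  simp only [Finset.sum_range_succ, Finset.sum_range_zero] at htaylor
  calc ‖(n : ℂ) * (Complex.exp z - 1 - z) - -(a ^ 2 * u ^ 2 / 2)‖
      = n * ‖Complex.exp z - (0 + z ^ 0 / (Nat.factorial 0) + z ^ 1 / (Nat.factorial 1) +
          z ^ 2 / (Nat.factorial 2))‖ := by
        rw [← hzsq, ← mul_sub, norm_mul, Complex.norm_natCast]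
        congr 2
        simp [Nat.factorial]
        ring
    _ ≤ n * (‖z‖ ^ 3 * Real.exp ‖z‖) := by gcongr
    _ = _ := by
        rw [hnorm, mul_pow]
        field_simp
        rw [hss, mul_comm]

/-- The Fourier sum with weights `w` at the integer points `j - 1`. -/
noncomputable def shiftedCharSum (q : ℕ) (w : ℕ → ℝ) (t : ℝ) : ℂ :=
  ∑ j ∈ Finset.range q, (w j : ℂ) * Complex.exp ((((j : ℝ) - 1) * t : ℝ) * Complex.I)

theorem tendsto_shiftedCharSum_pow {q : ℕ} {w : ℕ → ℝ} {V : ℝ}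
    (hsum : ∑ j ∈ Finset.range q, w j = 1)
    (hmean : ∑ j ∈ Finset.range q, w j * ((j : ℝ) - 1) = 0)
    (hvar : ∑ j ∈ Finset.range q, w j * ((j : ℝ) - 1) ^ 2 = V) (u : ℝ) :
    Tendsto (fun n : ℕ => shiftedCharSum q w (u / √n) ^ n) atTop
      (nhds (Real.exp (-(V / 2) * u ^ 2) : ℂ)) := by
  have hlim : Tendsto (fun n : ℕ => (n : ℂ) * (shiftedCharSum q w (u / √n) - 1)) atTop
      (nhds ((-(V / 2) * u ^ 2 : ℝ) : ℂ)) := by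
    have h := tendsto_finsetSum (Finset.range q) fun j _ =>
      (tendsto_nat_mul_exp_sub_one_sub_id ((j : ℝ) - 1) u).const_mul (w j : ℂ)
    convert h using 1
    · ext n
      have hsum' : ∑ j ∈ Finset.range q, (w j : ℂ) = 1 := by exact_mod_cast hsum
      have hmean' : ∑ j ∈ Finset.range q, (w j : ℂ) * ((j : ℂ) - 1) = 0 := by
        exact_mod_cast hmean
      have hterm : ∀ j ∈ Finset.range q, (w j : ℂ) * ((n : ℂ) *
          (Complex.exp ((((j : ℝ) - 1) * (u / √n) : ℝ) * Complex.I) - 1 -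
            (((j : ℝ) - 1) * (u / √n) : ℝ) * Complex.I)) =
          n * ((w j : ℂ) * Complex.exp ((((j : ℝ) - 1) * (u / √n) : ℝ) * Complex.I)) -
            n * (w j : ℂ) - n * (u / √n) * Complex.I * ((w j : ℂ) * ((j : ℂ) - 1)) := by
        intro j _
        push_cast
        ring
      rw [Finset.sum_congr rfl hterm, Finset.sum_sub_distrib, Finset.sum_sub_distrib,
        ← Finset.mul_sum, ← Finset.mul_sum, ← Finset.mul_sum, hsum', hmean', shiftedCharSum]
      ring
    · congr 1
      have hvar' : ∑ j ∈ Finset.range q, (w j : ℂ) * ((j : ℂ) - 1) ^ 2 = (V : ℂ) := by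
        rw [← hvar]
        push_cast
        rfl
      push_cast
      rw [← hvar', Finset.sum_div, ← Finset.sum_neg_distrib, Finset.sum_mul]
      refine Finset.sum_congr rfl fun j _ => ?_
      ring
  simpa using Complex.tendsto_one_add_pow_exp_of_tendsto hlim

theorem norm_add_mul_exp_le {a b : ℝ} (ha : 0 < a) (hb : 0 < b) (t : ℝ) :
    ‖(a : ℂ) + b * Complex.exp (t * Complex.I)‖ ≤ a + b - a * b / (a + b) * (1 - Real.cos t) := by
  have hcos := Real.neg_one_le_cos t
  have hab : a * b / (a + b) * 2 ≤ a + b := by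
    rw [div_mul_eq_mul_div, div_le_iff₀ (by positivity)]
    nlinarith [sq_nonneg (a - b), mul_pos ha hb]
  have hp : 0 < a * b / (a + b) := by positivity
  have hrhs : 0 ≤ a + b - a * b / (a + b) * (1 - Real.cos t) := by nlinarith
  refine le_of_sq_le_sq ?_ hrhs
  have hsq : ‖(a : ℂ) + b * Complex.exp (t * Complex.I)‖ ^ 2 =
      (a + b) ^ 2 - 2 * (a * b) * (1 - Real.cos t) := by
    rw [← Complex.normSq_eq_norm_sq, Complex.normSq_apply, Complex.exp_mul_I]
    simp [← Complex.ofReal_cos, ← Complex.ofReal_sin]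
    linear_combination b ^ 2 * Real.sin_sq_add_cos_sq t
  rw [hsq]
  have hm : a * b / (a + b) * (a + b) = a * b := by field_simp
  nlinarith [sq_nonneg (a * b / (a + b) * (1 - Real.cos t))]

theorem norm_shiftedCharSum_le {q : ℕ} (hq : 2 ≤ q) {w : ℕ → ℝ} (hw : ∀ j, 0 < w j)
    (hsum : ∑ j ∈ Finset.range q, w j = 1) {t : ℝ} (ht : |t| ≤ Real.pi) :
    ‖shiftedCharSum q w t‖ ≤
      Real.exp (-(w 0 * w 1 / (w 0 + w 1) * (2 / Real.pi ^ 2)) * t ^ 2) := by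
  obtain ⟨m, rfl⟩ := Nat.exists_eq_add_of_le' hq
  rw [Finset.sum_range_succ', Finset.sum_range_succ'] at hsum
  rw [shiftedCharSum, Finset.sum_range_succ', Finset.sum_range_succ', add_assoc]
  have htail : ‖∑ j ∈ Finset.range m, (w (j + 1 + 1) : ℂ) *
      Complex.exp (((((j + 1 + 1 : ℕ) : ℝ) - 1) * t : ℝ) * Complex.I)‖ ≤
      ∑ j ∈ Finset.range m, w (j + 1 + 1) := by
    refine (norm_sum_le _ _).trans_eq (Finset.sum_congr rfl fun j _ => ?_)
    rw [norm_mul, Complex.norm_exp_ofReal_mul_I, mul_one, Complex.norm_real,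
      Real.norm_of_nonneg (hw _).le]
  have hhead : ‖(w (0 + 1) : ℂ) * Complex.exp (((((0 + 1 : ℕ) : ℝ) - 1) * t : ℝ) * Complex.I) +
      (w 0 : ℂ) * Complex.exp (((((0 : ℕ) : ℝ) - 1) * t : ℝ) * Complex.I)‖ ≤
      w 1 + w 0 - w 1 * w 0 / (w 1 + w 0) * (1 - Real.cos t) := by
    have h := norm_add_mul_exp_le (hw 1) (hw 0) (-t)
    rw [Real.cos_neg] at h
    simpa using h
  have hcos := Real.cos_le_one_sub_mul_cos_sq ht
  have hp : 0 < w 0 * w 1 / (w 0 + w 1) := by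
    have := hw 0
    have := hw 1
    positivity
  rw [mul_comm (w 1), add_comm (w 1)] at hhead
  have hexp := Real.add_one_le_exp (-(w 0 * w 1 / (w 0 + w 1) * (2 / Real.pi ^ 2)) * t ^ 2)
  have hmul := mul_le_mul_of_nonneg_left hcos hp.le
  refine (norm_add_le _ _).trans ?_
  simp only [zero_add] at hsum hhead ⊢
  linarith

theorem Polynomial.integral_eval_circle_mul_exp (P : Polynomial ℂ) (r : ℂ) (k : ℕ) :
    ∫ t in -Real.pi..Real.pi, P.eval (r * Complex.exp (t * Complex.I)) *
      Complex.exp (-(k * (t * Complex.I))) = 2 * Real.pi * (P.coeff k * r ^ k) := by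
  induction P using Polynomial.induction_on' with
  | add p s hp hs =>
    simp only [Polynomial.eval_add, add_mul, Polynomial.coeff_add, mul_add]
    rw [intervalIntegral.integral_add, hp, hs]
    · exact Continuous.intervalIntegrable (by fun_prop) _ _
    · exact Continuous.intervalIntegrable (by fun_prop) _ _
  | monomial m a =>
    have hint : ∀ t : ℝ, (Polynomial.monomial m a).eval (r * Complex.exp (t * Complex.I)) *
        Complex.exp (-(k * (t * Complex.I))) =
        a * r ^ m * Complex.exp (((m : ℂ) - k) * Complex.I * t) := by
      intro t
      rw [Polynomial.eval_monomial, mul_pow, ← Complex.exp_nat_mul, mul_assoc, mul_assoc,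
        ← Complex.exp_add, mul_assoc]
      ring_nf
    simp_rw [hint]
    rw [intervalIntegral.integral_const_mul, Polynomial.coeff_monomial]
    split_ifs with hmk
    · subst hmk
      simp
      ring
    · have hne : ((m : ℂ) - k) ≠ 0 := sub_ne_zero.2 (by exact_mod_cast hmk)
      rw [integral_exp_mul_complex (mul_ne_zero hne Complex.I_ne_zero)]
      have hper : Complex.exp (((m : ℂ) - k) * Complex.I * (Real.pi : ℝ)) =
          Complex.exp (((m : ℂ) - k) * Complex.I * ((-Real.pi : ℝ) : ℂ)) := by
        rw [Complex.exp_eq_exp_iff_exists_int]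
        refine ⟨(m : ℤ) - k, ?_⟩
        push_cast
        ring
      simp [hper]

theorem sum_range_id_mul_pow_mul (r : ℝ) (q : ℕ) :
    (∑ j ∈ Finset.range q, (j : ℝ) * r ^ j) * (1 - r) ^ 2 =
      r - q * r ^ q + (q - 1) * r ^ (q + 1) := by
  induction q with
  | zero => simp
  | succ q ih =>
    rw [Finset.sum_range_succ, add_mul, ih]
    push_cast
    ring

theorem sum_range_sq_mul_pow_mul (r : ℝ) (q : ℕ) :
    (∑ j ∈ Finset.range q, (j : ℝ) ^ 2 * r ^ j) * (1 - r) ^ 3 =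
      r + r ^ 2 - r ^ q * (q ^ 2 - (2 * q ^ 2 - 2 * q - 1) * r + (q - 1) ^ 2 * r ^ 2) := by
  induction q with
  | zero => simp
  | succ q ih =>
    rw [Finset.sum_range_succ, add_mul, ih]
    push_cast
    ring

theorem sum_range_pow_eq {r : ℝ} (hr1 : r < 1) (q : ℕ) :
    ∑ j ∈ Finset.range q, r ^ j = (1 - r ^ q) / (1 - r) := by
  rw [geom_sum_eq hr1.ne, ← neg_sub 1 (r ^ q), ← neg_sub 1 r, neg_div_neg_eq]

theorem sum_range_pow_mul_sub_one {q : ℕ} {r : ℝ} (hr1 : r < 1)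
    (hroot : ((q : ℝ) - 2) * r ^ (q + 1) - ((q : ℝ) - 1) * r ^ q + 2 * r - 1 = 0) :
    ∑ j ∈ Finset.range q, r ^ j * ((j : ℝ) - 1) = 0 := by
  have h1 : 1 - r ≠ 0 := (sub_pos.2 hr1).ne'
  have hsplit : ∑ j ∈ Finset.range q, r ^ j * ((j : ℝ) - 1) =
      ∑ j ∈ Finset.range q, (j : ℝ) * r ^ j - ∑ j ∈ Finset.range q, r ^ j := by
    rw [← Finset.sum_sub_distrib]
    exact Finset.sum_congr rfl fun j _ => by ring
  have hgeom : (∑ j ∈ Finset.range q, r ^ j) * (1 - r) = 1 - r ^ q := by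
    rw [sum_range_pow_eq hr1]; field_simp
  refine (mul_eq_zero.1 ?_).resolve_right (pow_ne_zero 2 h1)
  rw [hsplit]
  linear_combination sum_range_id_mul_pow_mul r q - (1 - r) * hgeom + hroot

theorem sum_range_pow_mul_sub_one_sq {q : ℕ} (hq : q ≠ 0) {r : ℝ} (hr0 : 0 < r) (hr1 : r < 1)
    (hroot : ((q : ℝ) - 2) * r ^ (q + 1) - ((q : ℝ) - 1) * r ^ q + 2 * r - 1 = 0) :
    ∑ j ∈ Finset.range q, r ^ j * ((j : ℝ) - 1) ^ 2 =
      (r / (1 - r) ^ 2 - (q : ℝ) ^ 2 * r ^ q / (1 - r ^ q) ^ 2) *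
        ((1 - r ^ q) / (1 - r)) := by
  have h1 : 1 - r ≠ 0 := (sub_pos.2 hr1).ne'
  have h2 : 1 - r ^ q ≠ 0 := (sub_pos.2 (pow_lt_one₀ hr0.le hr1 hq)).ne'
  have hsplit : ∑ j ∈ Finset.range q, r ^ j * ((j : ℝ) - 1) ^ 2 =
      ∑ j ∈ Finset.range q, (j : ℝ) ^ 2 * r ^ j - ∑ j ∈ Finset.range q, r ^ j
        - 2 * ∑ j ∈ Finset.range q, r ^ j * ((j : ℝ) - 1) := by
    rw [Finset.mul_sum, ← Finset.sum_sub_distrib, ← Finset.sum_sub_distrib]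
    exact Finset.sum_congr rfl fun j _ => by ring
  have hsq : ∑ j ∈ Finset.range q, (j : ℝ) ^ 2 * r ^ j =
      (r + r ^ 2 - r ^ q * (q ^ 2 - (2 * q ^ 2 - 2 * q - 1) * r + (q - 1) ^ 2 * r ^ 2)) /
        (1 - r) ^ 3 :=
    eq_div_of_mul_eq (pow_ne_zero 3 h1) (sum_range_sq_mul_pow_mul r q)
  rw [hsplit, sum_range_pow_mul_sub_one hr1 hroot, hsq, sum_range_pow_eq hr1]
  rw [pow_succ] at hroot
  generalize r ^ q = A at *
  generalize (q : ℝ) = Q at *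
  field_simp
  linear_combination (1 + A * (Q * r - Q - 1)) * hroot

theorem coeff_geom_pow_eq_polyCoeff (n q k : ℕ) :
    ((∑ i ∈ Finset.range q, Polynomial.X ^ i : Polynomial ℂ) ^ n).coeff k = polyCoeff n q k := by
  have hmap : (∑ i ∈ Finset.range q, Polynomial.X ^ i : Polynomial ℂ) ^ n =
      ((∑ i ∈ Finset.range q, Polynomial.X ^ i : Polynomial ℕ) ^ n).map (Nat.castRingHom ℂ) := by
    simp [Polynomial.map_sum]
  rw [hmap, Polynomial.coeff_map, polyCoeff]
  rfl

theorem integral_shiftedCharSum_pow (n q : ℕ) (r : ℝ) {S : ℝ} (hS : S ≠ 0) :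
    ∫ t in -Real.pi..Real.pi, shiftedCharSum q (fun j => r ^ j / S) t ^ n =
      2 * Real.pi * (polyCoeff n q n * (r / S) ^ n) := by
  have hS' : (S : ℂ) ≠ 0 := by exact_mod_cast hS
  have hcauchy := Polynomial.integral_eval_circle_mul_exp
    ((∑ i ∈ Finset.range q, Polynomial.X ^ i : Polynomial ℂ) ^ n) r n
  rw [coeff_geom_pow_eq_polyCoeff] at hcauchy
  have hpoint : ∀ t : ℝ, shiftedCharSum q (fun j => r ^ j / S) t ^ n = ((S : ℂ) ^ n)⁻¹ *
      (((∑ i ∈ Finset.range q, Polynomial.X ^ i : Polynomial ℂ) ^ n).eval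
        (r * Complex.exp (t * Complex.I)) * Complex.exp (-(n * (t * Complex.I)))) := by
    intro t
    have hbase : shiftedCharSum q (fun j => r ^ j / S) t = (S : ℂ)⁻¹ *
        ((∑ i ∈ Finset.range q, (r * Complex.exp (t * Complex.I)) ^ i) *
          Complex.exp (-(t * Complex.I))) := by
      rw [shiftedCharSum, Finset.sum_mul, Finset.mul_sum]
      refine Finset.sum_congr rfl fun j _ => ?_
      have hexp : Complex.exp ((((j : ℝ) - 1) * t : ℝ) * Complex.I) =
          Complex.exp (t * Complex.I) ^ j * Complex.exp (-(t * Complex.I)) := by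
        rw [← Complex.exp_nat_mul, ← Complex.exp_add]
        congr 1
        push_cast
        ring
      rw [hexp, mul_pow]
      push_cast
      ring
    rw [hbase, mul_pow, mul_pow, inv_pow, ← Complex.exp_nat_mul, Polynomial.eval_pow,
      Polynomial.eval_finsetSum]
    simp
  simp_rw [hpoint]
  rw [intervalIntegral.integral_const_mul, hcauchy, div_pow]
  field_simp

theorem polyCoeff_central_asymptotic (q : ℕ) (hq : 4 ≤ q) (r : ℝ) (hr0 : 0 < r) (hr1 : r < 1)
    (hroot : ((q : ℝ) - 2) * r ^ (q + 1) - ((q : ℝ) - 1) * r ^ q + 2 * r - 1 = 0) :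
    Tendsto
      (fun n : ℕ =>
        (polyCoeff n q n : ℝ) * Real.sqrt (2 * Real.pi * n) * ((r - r ^ 2) / (1 - r ^ q)) ^ n /
          (1 / Real.sqrt (r / (1 - r) ^ 2 - (q : ℝ) ^ 2 * r ^ q / (1 - r ^ q) ^ 2)))
      atTop (nhds 1) := by
  have h1 : 0 < 1 - r := sub_pos.2 hr1
  have h2 : 0 < 1 - r ^ q := sub_pos.2 (pow_lt_one₀ hr0.le hr1 (by omega))
  have hvarS := sum_range_pow_mul_sub_one_sq (by omega : q ≠ 0) hr0 hr1 hroot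
  set V := r / (1 - r) ^ 2 - (q : ℝ) ^ 2 * r ^ q / (1 - r ^ q) ^ 2
  set S := (1 - r ^ q) / (1 - r) with hS
  have hSpos : 0 < S := div_pos h2 h1
  have hV : 0 < V := by
    refine pos_of_mul_pos_left (b := S) ?_ hSpos.le
    rw [← hvarS]
    refine Finset.sum_pos' (fun j _ => by positivity) ⟨0, Finset.mem_range.2 (by omega), ?_⟩
    norm_num
  have hratio : (r - r ^ 2) / (1 - r ^ q) = r / S := by
    rw [hS]
    field_simp
  have hsum : ∑ j ∈ Finset.range q, r ^ j / S = 1 := by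
    rw [← Finset.sum_div, sum_range_pow_eq hr1, ← hS, div_self hSpos.ne']
  have hmean : ∑ j ∈ Finset.range q, r ^ j / S * ((j : ℝ) - 1) = 0 := by
    simp_rw [div_mul_eq_mul_div]
    rw [← Finset.sum_div, sum_range_pow_mul_sub_one hr1 hroot, zero_div]
  have hvar : ∑ j ∈ Finset.range q, r ^ j / S * ((j : ℝ) - 1) ^ 2 = V := by
    simp_rw [div_mul_eq_mul_div]
    rw [← Finset.sum_div, hvarS, mul_div_cancel_right₀ _ hSpos.ne']
  have hw : ∀ j : ℕ, 0 < r ^ j / S := fun j => by positivity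
  have hcont : Continuous (shiftedCharSum q fun j => r ^ j / S) := by
    unfold shiftedCharSum
    fun_prop
  have hc : 0 < r ^ 0 / S * (r ^ 1 / S) / (r ^ 0 / S + r ^ 1 / S) * (2 / Real.pi ^ 2) := by
    positivity
  have hlim := tendsto_sqrt_mul_integral_pow hcont hc
    (fun t ht => norm_shiftedCharSum_le (by omega) hw hsum ht)
    (tendsto_shiftedCharSum_pow hsum hmean hvar)
  simp_rw [integral_shiftedCharSum_pow _ q r hSpos.ne'] at hlim
  have hreal : Tendsto
      (fun n : ℕ => √n * (2 * Real.pi * ((polyCoeff n q n : ℝ) * (r / S) ^ n))) atTop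
      (nhds √(2 * Real.pi / V)) := by
    rw [← tendsto_ofReal_iff]
    simpa using hlim
  have hpi := Real.pi_pos
  have hsqrt : √(2 * Real.pi) ^ 2 = 2 * Real.pi := Real.sq_sqrt (by positivity)
  have hsV : 0 < √V := Real.sqrt_pos.2 hV
  have hsP : 0 < √(2 * Real.pi) := Real.sqrt_pos.2 (by positivity)
  convert hreal.const_mul (√V / √(2 * Real.pi)) using 1
  · ext n
    rw [hratio, Real.sqrt_mul (by positivity) (n : ℝ), ← hsqrt, Real.sqrt_sq hsP.le]
    field_simp
  · rw [Real.sqrt_div (by positivity)]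
    field_simp
end

section
/- For every real number t with 0 < t \le 1/2, one has e^{-2t} + e^{-t/2} < 2 e^{-t}. In particular, for every integer i \le -1, e^{-2^{i+1}} + e^{-2^{i-1}} < 2 e^{-2^i}. -/
/-- With `y = exp (-t / 2)`, the inequality reads `y * (y - 1) * (y ^ 2 + y - 1) < 0`. -/
theorem exp_neg_two_mul_add_exp_neg_half_lt {t : ℝ} (h0 : 0 < t) (h1 : t ≤ 1 / 2) :
    Real.exp (-2 * t) + Real.exp (-t / 2) < 2 * Real.exp (-t) := by
  have e4 : Real.exp (-2 * t) = Real.exp (-t / 2) ^ 4 := by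
    rw [← Real.exp_nat_mul]; congr 1; push_cast; ring
  have e2 : Real.exp (-t) = Real.exp (-t / 2) ^ 2 := by
    rw [← Real.exp_nat_mul]; congr 1; push_cast; ring
  have hlt : Real.exp (-t / 2) < 1 := Real.exp_lt_one_iff.mpr (by linarith)
  have hge : 3 / 4 ≤ Real.exp (-t / 2) := by
    linarith [Real.add_one_le_exp (-t / 2)]
  rw [e4, e2]
  generalize Real.exp (-t / 2) = y at hlt hge
  have hq : 0 < y ^ 2 + y - 1 := by nlinarith
  have hprod : 0 < y * (1 - y) * (y ^ 2 + y - 1) :=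
    mul_pos (mul_pos (by linarith) (by linarith)) hq
  linarith [show y * (1 - y) * (y ^ 2 + y - 1) = 2 * y ^ 2 - y ^ 4 - y by ring]

theorem exp_strict_convexity_small :
    (∀ t : ℝ, 0 < t → t ≤ 1 / 2 →
      Real.exp (-2 * t) + Real.exp (-t / 2) < 2 * Real.exp (-t)) ∧
    ∀ i : ℤ, i ≤ -1 →
      Real.exp (-(2 : ℝ) ^ (i + 1)) + Real.exp (-(2 : ℝ) ^ (i - 1)) <
        2 * Real.exp (-(2 : ℝ) ^ i) := by
  refine ⟨fun t h0 h1 => exp_neg_two_mul_add_exp_neg_half_lt h0 h1, fun i hi => ?_⟩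
  have hle : (2 : ℝ) ^ i ≤ 1 / 2 :=
    (zpow_le_zpow_right₀ one_le_two hi).trans_eq (by norm_num)
  convert exp_neg_two_mul_add_exp_neg_half_lt (zpow_pos two_pos i) hle using 3
  · rw [zpow_add_one₀ two_ne_zero]; ring
  · rw [zpow_sub_one₀ two_ne_zero]; ring
end

section
/- For a positive integer k, let a(k,q) denote the number of compositions of k whose largest part equals q. Then for every k \ge 1 the sequence q \mapsto a(k,q) on 1 \le q \le k is unimodal, and its maximum value is attained at q = \lfloor \log_2 k \rfloor or at q = \lfloor \log_2 k \rfloor + 1 and at no other value of q; moreover, each of these two locations attains the maximum for infinitely many k. -/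
/-- `maxPartCompositions k q` is the number of compositions of `k` (ordered lists of positive
integers summing to `k`) whose largest part equals `q`. -/
noncomputable def maxPartCompositions (k q : ℕ) : ℕ :=
  Nat.card {l : List ℕ // l.sum = k ∧ (∀ x ∈ l, 1 ≤ x ∧ x ≤ q) ∧ q ∈ l}

/-- The compositions of `n` all of whose parts are at most `q`. -/
def boundedCompositions (q : ℕ) : ℕ → Finset (List ℕ)
  | 0 => {[]}
  | n + 1 => (Finset.range (min q (n + 1))).biUnion fun i =>
      (boundedCompositions q (n - i)).image (List.cons (i + 1))

theorem mem_boundedCompositions (q n : ℕ) (l : List ℕ) :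
    l ∈ boundedCompositions q n ↔ l.sum = n ∧ ∀ x ∈ l, 1 ≤ x ∧ x ≤ q := by
  induction n using Nat.strong_induction_on generalizing l with
  | _ n ih =>
    cases n with
    | zero =>
      rw [boundedCompositions]
      cases l with
      | nil => simp
      | cons a l =>
        simp only [Finset.mem_singleton, List.sum_cons, List.mem_cons, forall_eq_or_imp,
          reduceCtorEq, false_iff]
        rintro ⟨h, ⟨h₁, -⟩, -⟩
        omega
    | succ n =>
      rw [boundedCompositions]
      simp only [Finset.mem_biUnion, Finset.mem_range, Finset.mem_image]
      constructor
      · rintro ⟨i, hi, l, hl, rfl⟩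
        rw [ih _ (by omega)] at hl
        simp only [List.sum_cons, List.mem_cons, forall_eq_or_imp]
        exact ⟨by omega, by omega, hl.2⟩
      · cases l with
        | nil => simp
        | cons a l =>
          simp only [List.sum_cons, List.mem_cons, forall_eq_or_imp]
          rintro ⟨h, ⟨h₁, h₂⟩, h₃⟩
          refine ⟨a - 1, by omega, l, ?_, by congr 1; omega⟩
          rw [ih _ (by omega)]
          exact ⟨by omega, h₃⟩

/-- The number of compositions of `n` all of whose parts are at most `q`. -/
def boundedCount (q n : ℕ) : ℕ := (boundedCompositions q n).card

theorem boundedCount_zero_right (q : ℕ) : boundedCount q 0 = 1 := by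
  simp [boundedCount, boundedCompositions]

theorem boundedCount_succ_eq_sum (q n : ℕ) :
    boundedCount q (n + 1) = ∑ i ∈ Finset.range (min q (n + 1)), boundedCount q (n - i) := by
  rw [boundedCount, boundedCompositions, Finset.card_biUnion]
  · exact Finset.sum_congr rfl fun i _ =>
      Finset.card_image_of_injective _ List.cons_injective
  · intro i _ j _ hij
    rw [Function.onFun, Finset.disjoint_left]
    simp only [Finset.mem_image, not_exists, not_and]
    rintro _ ⟨l, -, rfl⟩ l' - h
    simp only [List.cons.injEq] at h
    omega

theorem boundedCount_add_eq_sum (q n : ℕ) (h : 1 ≤ q) :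
    boundedCount q (n + q) = ∑ i ∈ Finset.range q, boundedCount q (n + i) := by
  obtain ⟨q, rfl⟩ : ∃ r, q = r + 1 := ⟨q - 1, by omega⟩
  rw [← add_assoc, boundedCount_succ_eq_sum, min_eq_left (by omega),
    ← Finset.sum_range_reflect]
  refine Finset.sum_congr rfl fun i hi => ?_
  rw [Finset.mem_range] at hi
  congr 1
  omega

theorem boundedCount_succ_of_lt (q n : ℕ) (h : n < q) : boundedCount q (n + 1) = 2 ^ n := by
  induction n with
  | zero => simp [boundedCount_succ_eq_sum, boundedCount_zero_right, show min q 1 = 1 by omega]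
  | succ n ih =>
    have ih := ih (by omega)
    rw [boundedCount_succ_eq_sum, min_eq_right (by omega)] at ih ⊢
    rw [Finset.sum_range_succ']
    simp only [Nat.add_sub_add_right, Nat.sub_zero]
    rw [ih, boundedCount_succ_eq_sum, min_eq_right (by omega), ih]
    ring

theorem boundedCount_recurrence (q n : ℕ) (h : 1 ≤ n + q) :
    boundedCount q (n + q + 1) + boundedCount q n = 2 * boundedCount q (n + q) := by
  obtain ⟨m, hm⟩ : ∃ m, n + q = m + 1 := ⟨n + q - 1, by omega⟩
  rcases Nat.eq_zero_or_pos q with rfl | hq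
  · simp only [add_zero] at hm ⊢
    subst hm
    simp [boundedCount_succ_eq_sum]
  · have h₁ := boundedCount_add_eq_sum q n hq
    have h₂ := boundedCount_add_eq_sum q (n + 1) hq
    have h₃ := Finset.sum_range_succ (fun i => boundedCount q (n + i)) q
    rw [Finset.sum_range_succ'] at h₃
    simp only [add_zero] at h₃
    have h₄ : ∑ i ∈ Finset.range q, boundedCount q (n + 1 + i) =
        ∑ i ∈ Finset.range q, boundedCount q (n + (i + 1)) :=
      Finset.sum_congr rfl fun i _ => by congr 1; omega
    rw [show n + q + 1 = n + 1 + q by omega]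
    omega

theorem maxPartCompositions_add_boundedCount (k q : ℕ) :
    maxPartCompositions k (q + 1) + boundedCount q k = boundedCount (q + 1) k := by
  have h₁ : maxPartCompositions k (q + 1) =
      ((boundedCompositions (q + 1) k).filter (q + 1 ∈ ·)).card := by
    refine Nat.subtype_card _ fun l => ?_
    rw [Finset.mem_filter, mem_boundedCompositions, and_assoc]
  have h₂ : boundedCompositions q k =
      (boundedCompositions (q + 1) k).filter (q + 1 ∉ ·) := by
    ext l
    rw [Finset.mem_filter, mem_boundedCompositions, mem_boundedCompositions]
    constructor
    · rintro ⟨h, h'⟩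
      exact ⟨⟨h, fun x hx => ⟨(h' x hx).1, by linarith [(h' x hx).2]⟩⟩, fun hq => by
        linarith [(h' _ hq).2]⟩
    · rintro ⟨⟨h, h'⟩, hq⟩
      refine ⟨h, fun x hx => ⟨(h' x hx).1, ?_⟩⟩
      have := (h' x hx).2
      have : x ≠ q + 1 := fun h => hq (h ▸ hx)
      omega
  rw [h₁, boundedCount, h₂, boundedCount, Finset.card_filter_add_card_filter_not]

/-- The number `boundedCount q (n + 1)`, normalised by the number `2 ^ n` of all compositions of
`n + 1`. -/
noncomputable def boundedDensity (q n : ℕ) : ℝ := boundedCount q (n + 1) / 2 ^ n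

theorem boundedCount_eq_boundedDensity (q n : ℕ) :
    (boundedCount q (n + 1) : ℝ) = 2 ^ n * boundedDensity q n := by
  rw [boundedDensity]
  field_simp

theorem boundedDensity_nonneg (q n : ℕ) : 0 ≤ boundedDensity q n := by
  rw [boundedDensity]
  positivity

theorem boundedDensity_of_lt {q n : ℕ} (h : n < q) : boundedDensity q n = 1 := by
  rw [boundedDensity, boundedCount_succ_of_lt q n h]
  push_cast
  field_simp

theorem boundedDensity_self (q : ℕ) : boundedDensity q q = 1 - 1 / 2 ^ q := by
  rcases q with _ | q
  · simp [boundedDensity, boundedCount_succ_eq_sum]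
  · have h := boundedCount_recurrence (q + 1) 0 (by omega)
    rw [zero_add, boundedCount_zero_right, boundedCount_succ_of_lt (q + 1) q (by omega)] at h
    have h' : (boundedCount (q + 1) (q + 1 + 1) : ℝ) + 1 = 2 * 2 ^ q := by exact_mod_cast h
    rw [boundedDensity, eq_sub_of_add_eq h']
    field_simp
    ring

theorem boundedDensity_recurrence (q n : ℕ) :
    boundedDensity q (n + q + 1) = boundedDensity q (n + q) - boundedDensity q n / 2 ^ (q + 1) := by
  have h := boundedCount_recurrence q (n + 1) (by omega)
  have h' : (boundedCount q (n + q + 1 + 1) : ℝ) + boundedCount q (n + 1) =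
      2 * boundedCount q (n + q + 1) := by
    rw [show n + q + 1 = n + 1 + q by omega]
    exact_mod_cast h
  rw [boundedDensity, boundedDensity, boundedDensity, eq_sub_of_add_eq h']
  field_simp
  ring

theorem boundedDensity_antitone (q : ℕ) : Antitone (boundedDensity q) := by
  refine antitone_nat_of_succ_le fun n => ?_
  rcases lt_trichotomy (n + 1) q with h | rfl | h
  · rw [boundedDensity_of_lt h, boundedDensity_of_lt (by omega)]
  · rw [boundedDensity_self, boundedDensity_of_lt (by omega)]
    have : (0 : ℝ) ≤ 1 / 2 ^ (n + 1) := by positivity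
    linarith
  · obtain ⟨j, rfl⟩ : ∃ j, n = j + q := ⟨n - q, by omega⟩
    rw [boundedDensity_recurrence]
    have := boundedDensity_nonneg q j
    have : 0 ≤ boundedDensity q j / 2 ^ (q + 1) := by positivity
    linarith

theorem boundedDensity_le_one (q n : ℕ) : boundedDensity q n ≤ 1 := by
  refine (boundedDensity_antitone q (Nat.zero_le n)).trans ?_
  rcases q with _ | q
  · simp [boundedDensity_self]
  · rw [boundedDensity_of_lt (by omega)]

theorem boundedDensity_succ_le (q j : ℕ) :
    boundedDensity q (j + q + 1) ≤ (1 - 1 / 2 ^ (q + 1)) * boundedDensity q (j + q) := by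
  rw [boundedDensity_recurrence]
  have h : boundedDensity q (j + q) / 2 ^ (q + 1) ≤ boundedDensity q j / 2 ^ (q + 1) := by
    gcongr
    exact boundedDensity_antitone q (by omega)
  linarith [h, mul_comm (1 / (2 : ℝ) ^ (q + 1)) (boundedDensity q (j + q)),
    mul_one_div (boundedDensity q (j + q)) ((2 : ℝ) ^ (q + 1))]

theorem boundedDensity_le_exp (q j : ℕ) :
    boundedDensity q (j + q) ≤ Real.exp (-((j + 1) * (1 / 2 ^ (q + 1)))) := by
  have hx (x : ℝ) : 1 - x ≤ Real.exp (-x) := by linarith [Real.add_one_le_exp (-x)]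
  induction j with
  | zero =>
    rw [zero_add, boundedDensity_self]
    refine le_trans ?_ (hx _)
    have : (1 : ℝ) / 2 ^ (q + 1) ≤ 1 / 2 ^ q := by
      gcongr <;> norm_num
    rw [Nat.cast_zero]
    linarith
  | succ j ih =>
    rw [show j + 1 + q = j + q + 1 by omega]
    refine (boundedDensity_succ_le q j).trans ?_
    have h := mul_le_mul (hx (1 / 2 ^ (q + 1))) ih (boundedDensity_nonneg _ _)
      (Real.exp_pos _).le
    rw [← Real.exp_add] at h
    refine h.trans_eq ?_
    push_cast
    ring_nf

theorem four_mul_le_two_pow_succ {q : ℕ} (h : 1 ≤ q) : 4 * q ≤ 2 ^ (q + 1) := by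
  induction q, h using Nat.le_induction with
  | base => norm_num
  | succ q hq ih => rw [pow_succ]; omega

theorem le_boundedDensity_succ {q : ℕ} (hq : 1 ≤ q) (n : ℕ) :
    (1 - 2 * (1 / 2 ^ (q + 1))) * boundedDensity q n ≤ boundedDensity q (n + 1) ∧
    (q ≤ n → (1 - 2 * q * (1 / 2 ^ (q + 1))) * boundedDensity q (n - q) ≤ boundedDensity q n) := by
  have hε : (4 * q : ℝ) * (1 / 2 ^ (q + 1)) ≤ 1 := by
    rw [mul_one_div, div_le_one (by positivity)]
    exact_mod_cast four_mul_le_two_pow_succ hq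
  have hq' : (1 : ℝ) ≤ q := by exact_mod_cast hq
  have hε₀ : (0 : ℝ) < 1 / 2 ^ (q + 1) := by positivity
  have hε₂ : (1 : ℝ) / 2 ^ q = 2 * (1 / 2 ^ (q + 1)) := by field_simp; ring
  have hrec := boundedDensity_recurrence q
  simp only [div_eq_mul_one_div (boundedDensity q _)] at hrec
  set ε : ℝ := 1 / 2 ^ (q + 1) with hεdef
  have hε₁ : 4 * ε ≤ 1 := by nlinarith
  induction n using Nat.strong_induction_on with
  | _ n ih =>
    have key (hn : q ≤ n) :
        (1 - 2 * q * ε) * boundedDensity q (n - q) ≤ boundedDensity q n := by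
      have hpow (i : ℕ) (hi : i ≤ q) :
          (1 - 2 * ε) ^ i * boundedDensity q (n - q) ≤ boundedDensity q (n - q + i) := by
        induction i with
        | zero => simp
        | succ i ihi =>
          have h₁ := ihi (by omega)
          have h₂ := (ih (n - q + i) (by omega)).1
          rw [pow_succ', mul_assoc, ← add_assoc]
          exact (mul_le_mul_of_nonneg_left h₁ (by linarith)).trans h₂
      have h₁ := hpow q le_rfl
      rw [Nat.sub_add_cancel hn] at h₁
      have h₂ := one_add_mul_le_pow (a := -(2 * ε)) (by linarith) q
      rw [← sub_eq_add_neg] at h₂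
      refine le_trans (mul_le_mul_of_nonneg_right ?_ (boundedDensity_nonneg _ _)) h₁
      linarith
    refine ⟨?_, key⟩
    rcases lt_trichotomy (n + 1) q with h | h | h
    · rw [boundedDensity_of_lt h, boundedDensity_of_lt (by omega)]
      linarith
    · rw [h, boundedDensity_self, boundedDensity_of_lt (by omega), hε₂]
      linarith
    · have h₁ := key (by omega)
      obtain ⟨j, rfl⟩ : ∃ j, n = j + q := ⟨n - q, by omega⟩
      rw [Nat.add_sub_cancel] at h₁
      rw [hrec]
      have h₂ := boundedDensity_nonneg q j
      have h₃ : boundedDensity q j ≤ 2 * boundedDensity q (j + q) := by nlinarith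
      nlinarith

theorem exp_le_boundedDensity {q : ℕ} (hq : 1 ≤ q) (j : ℕ) :
    (1 - 2 * (1 / 2 ^ (q + 1))) *
      Real.exp (-(j * (1 / 2 ^ (q + 1) / (1 - (2 * q + 1) * (1 / 2 ^ (q + 1)))))) ≤
      boundedDensity q (j + q) := by
  have hε : (4 * q : ℝ) * (1 / 2 ^ (q + 1)) ≤ 1 := by
    rw [mul_one_div, div_le_one (by positivity)]
    exact_mod_cast four_mul_le_two_pow_succ hq
  have hq' : (1 : ℝ) ≤ q := by exact_mod_cast hq
  have hε₀ : (0 : ℝ) < 1 / 2 ^ (q + 1) := by positivity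
  have hε₂ : (1 : ℝ) / 2 ^ q = 2 * (1 / 2 ^ (q + 1)) := by field_simp; ring
  have hrec := boundedDensity_recurrence q
  have hle (n : ℕ) := (le_boundedDensity_succ hq n).2
  simp only [div_eq_mul_one_div (boundedDensity q _)] at hrec
  set ε : ℝ := 1 / 2 ^ (q + 1) with hεdef
  have hε₁ : 4 * ε ≤ 1 := by nlinarith
  have hp : 0 < 1 - (2 * q + 1) * ε := by nlinarith
  have hp' : 0 < 1 - 2 * q * ε := by nlinarith
  set x : ℝ := ε / (1 - (2 * q + 1) * ε) with hx
  have hx₀ : 0 < x := div_pos hε₀ hp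
  have hexp : Real.exp (-x) ≤ 1 - ε / (1 - 2 * q * ε) := by
    have h₁ : 1 - ε / (1 - 2 * q * ε) = (1 + x)⁻¹ := by
      have h₂ : 1 + x = (1 - 2 * q * ε) / (1 - (2 * q + 1) * ε) := by
        rw [hx, eq_div_iff hp.ne', add_mul, div_mul_cancel₀ _ hp.ne']
        ring
      rw [h₂, inv_div, eq_div_iff hp'.ne', sub_mul, div_mul_cancel₀ _ hp'.ne']
      ring
    rw [h₁, Real.exp_neg]
    gcongr
    linarith [Real.add_one_le_exp x]
  induction j with
  | zero => simp [boundedDensity_self, hε₂]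
  | succ j ih =>
    have h₁ := hle (j + q) (by omega)
    rw [Nat.add_sub_cancel] at h₁
    have h₂ : boundedDensity q j * ε ≤ ε / (1 - 2 * q * ε) * boundedDensity q (j + q) := by
      rw [div_mul_eq_mul_div, le_div_iff₀ hp']
      nlinarith
    rw [show j + 1 + q = j + q + 1 by omega, hrec]
    have h₃ : Real.exp (-x) * boundedDensity q (j + q) ≤
        boundedDensity q (j + q) - boundedDensity q j * ε := by
      nlinarith [mul_le_mul_of_nonneg_right hexp (boundedDensity_nonneg q (j + q))]
    refine le_trans ?_ h₃
    refine le_trans (le_of_eq ?_) (mul_le_mul_of_nonneg_left ih (Real.exp_pos _).le)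
    rw [mul_left_comm, ← Real.exp_add]
    push_cast
    ring_nf

/-- A lower bound for `boundedDensity` with an explicit relative error compared to
`boundedDensity_le_exp`. -/
theorem mul_exp_le_boundedDensity {q j : ℕ} (hq : 1 ≤ q) {ε p : ℝ} (hε : ε = 1 / 2 ^ (q + 1))
    (hp : (2 * q + 1) * ε ≤ p) (hp₁ : p < 1) :
    (1 - 2 * ε) * (1 - j * ε * (p / (1 - p))) * Real.exp (-(j * ε)) ≤
      boundedDensity q (j + q) := by
  have hε₀ : 0 < ε := by rw [hε]; positivity
  have hε₁ : 2 * ε ≤ 1 := by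
    have : (1 : ℝ) ≤ 2 ^ q := one_le_pow₀ (by norm_num)
    rw [hε, mul_one_div, div_le_one (by positivity), pow_succ]
    linarith
  have h := exp_le_boundedDensity hq j
  rw [← hε] at h
  refine le_trans ?_ h
  rw [mul_assoc]
  refine mul_le_mul_of_nonneg_left ?_ (by linarith)
  have h₁ : ε / (1 - (2 * q + 1) * ε) ≤ ε + ε * (p / (1 - p)) := by
    have : ε + ε * (p / (1 - p)) = ε / (1 - p) := by
      have : 1 - p ≠ 0 := by linarith
      field_simp
      ring
    rw [this]
    gcongr
  have h₂ : Real.exp (-(j * ε * (p / (1 - p)))) * Real.exp (-(j * ε)) ≤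
      Real.exp (-(j * (ε / (1 - (2 * q + 1) * ε)))) := by
    rw [← Real.exp_add, Real.exp_le_exp]
    have := mul_le_mul_of_nonneg_left h₁ (Nat.cast_nonneg (α := ℝ) j)
    linarith
  refine le_trans (mul_le_mul_of_nonneg_right ?_ (Real.exp_pos _).le) h₂
  linarith [Real.add_one_le_exp (-(j * ε * (p / (1 - p))))]

theorem one_sub_le_boundedDensity (q n : ℕ) :
    1 - (n + 2) * (1 / 2 ^ (q + 1)) ≤ boundedDensity q n := by
  have hε₂ : (1 : ℝ) / 2 ^ q = 2 * (1 / 2 ^ (q + 1)) := by field_simp; ring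
  have hε₀ : (0 : ℝ) < 1 / 2 ^ (q + 1) := by positivity
  induction n with
  | zero =>
    rcases q with _ | q
    · rw [boundedDensity_self]; norm_num
    · rw [boundedDensity_of_lt (by omega)]
      norm_num
  | succ n ih =>
    rcases lt_trichotomy (n + 1) q with h | h | h
    · rw [boundedDensity_of_lt h]
      have : (0 : ℝ) ≤ ((n + 1 : ℕ) + 2) * (1 / 2 ^ (q + 1)) := by positivity
      linarith
    · rw [h, boundedDensity_self, hε₂]
      have : (0 : ℝ) ≤ q * (1 / 2 ^ (q + 1)) := by positivity
      linarith
    · obtain ⟨j, rfl⟩ : ∃ j, n = j + q := ⟨n - q, by omega⟩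
      rw [boundedDensity_recurrence, div_eq_mul_one_div (boundedDensity q j)]
      have := mul_le_mul_of_nonneg_right (boundedDensity_le_one q j) hε₀.le
      push_cast at ih ⊢
      linarith

/-- The values `f n, …, f 0`. -/
def valuesDownFrom (f : ℕ → ℕ) : ℕ → List ℕ
  | 0 => [f 0]
  | n + 1 => f (n + 1) :: valuesDownFrom f n

theorem sum_take_valuesDownFrom (f : ℕ → ℕ) (q n : ℕ) :
    ((valuesDownFrom f n).take q).sum = ∑ i ∈ Finset.range (min q (n + 1)), f (n - i) := by
  induction n generalizing q with
  | zero => rcases q with _ | q <;> simp [valuesDownFrom]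
  | succ n ih =>
    rcases q with _ | q
    · simp
    · rw [valuesDownFrom, List.take_succ_cons, List.sum_cons, ih, Nat.add_min_add_right,
        Finset.sum_range_succ', add_comm]
      simp

/-- An efficient way to compute `boundedCount q n, …, boundedCount q 0`. -/
def boundedCounts (q : ℕ) : ℕ → List ℕ
  | 0 => [1]
  | n + 1 => ((boundedCounts q n).take q).sum :: boundedCounts q n

theorem boundedCounts_eq (q n : ℕ) : boundedCounts q n = valuesDownFrom (boundedCount q) n := by
  induction n with
  | zero => rw [boundedCounts, valuesDownFrom, boundedCount_zero_right]
  | succ n ih =>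
    rw [boundedCounts, valuesDownFrom, ih, sum_take_valuesDownFrom, boundedCount_succ_eq_sum]

/-- Whether the first `m` entries of three lists satisfy a relation, and there are that many. -/
def allPrefix (R : ℕ → ℕ → ℕ → Bool) : ℕ → List ℕ → List ℕ → List ℕ → Bool
  | 0, _, _, _ => true
  | m + 1, a :: as, b :: bs, c :: cs => R a b c && allPrefix R m as bs cs
  | _ + 1, _, _, _ => false

theorem allPrefix_valuesDownFrom {R : ℕ → ℕ → ℕ → Bool} {f g h : ℕ → ℕ} {m n : ℕ}
    (H : allPrefix R m (valuesDownFrom f n) (valuesDownFrom g n) (valuesDownFrom h n)) {k : ℕ}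
    (hk : k ≤ n) (hm : n < m + k) : R (f k) (g k) (h k) := by
  induction n generalizing m with
  | zero =>
    obtain ⟨m, rfl⟩ : ∃ i, m = i + 1 := ⟨m - 1, by omega⟩
    obtain rfl : k = 0 := by omega
    simp only [valuesDownFrom, allPrefix, Bool.and_eq_true] at H
    exact H.1
  | succ n ih =>
    obtain ⟨m, rfl⟩ : ∃ i, m = i + 1 := ⟨m - 1, by omega⟩
    simp only [valuesDownFrom, allPrefix, Bool.and_eq_true] at H
    rcases hk.lt_or_eq with hk | rfl
    · exact ih H.2 (by omega) (by omega)
    · exact H.1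

theorem boundedCount_convex_of_small {r : ℕ} (hr : r < 10) {k : ℕ} (hk : 2 ^ (r + 2) ≤ k + 1)
    (hk' : k ≤ 2 ^ (r + 2) + r) :
    2 * boundedCount (r + 1) k < boundedCount r k + boundedCount (r + 2) k := by
  have H : ∀ r < 10, allPrefix (fun a b c => Nat.blt (2 * b) (a + c)) (r + 2)
      (boundedCounts r (2 ^ (r + 2) + r)) (boundedCounts (r + 1) (2 ^ (r + 2) + r))
      (boundedCounts (r + 2) (2 ^ (r + 2) + r)) := by
    decide +kernel
  have h := H r hr
  simp only [boundedCounts_eq] at h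
  simpa [Nat.blt_eq] using allPrefix_valuesDownFrom h hk' (by omega)

theorem boundedCount_concave_of_small {r : ℕ} (hr₀ : 1 ≤ r) (hr : r < 7) {k : ℕ} (hk : r < k)
    (hk' : k ≤ 2 ^ (r + 1)) :
    boundedCount r k + boundedCount (r + 2) k < 2 * boundedCount (r + 1) k := by
  have H : ∀ r < 7, 1 ≤ r → allPrefix (fun a b c => Nat.blt (a + c) (2 * b)) (2 ^ (r + 1) - r)
      (boundedCounts r (2 ^ (r + 1))) (boundedCounts (r + 1) (2 ^ (r + 1)))
      (boundedCounts (r + 2) (2 ^ (r + 1))) := by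
    decide +kernel
  have h := H r hr hr₀
  simp only [boundedCounts_eq] at h
  simpa [Nat.blt_eq] using allPrefix_valuesDownFrom h hk' (by omega)

theorem boundedCount_le_pred_of_small {r : ℕ} (hr : r < 10) :
    boundedCount r (2 ^ (r + 2) - 1) ≤ boundedCount (r + 2) (2 ^ (r + 2) - 2) := by
  have H : ∀ r < 10, (boundedCounts r (2 ^ (r + 2) - 1)).headI ≤
      (boundedCounts (r + 2) (2 ^ (r + 2) - 2)).headI := by
    decide +kernel
  have hhead (f : ℕ → ℕ) (n : ℕ) : (valuesDownFrom f n).headI = f n := by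
    cases n <;> rfl
  have h := H r hr
  rwa [boundedCounts_eq, boundedCounts_eq, hhead, hhead] at h

theorem exp_neg_half_le {z : ℝ} (hz : 1 - 12 / 4096 ≤ z) : Real.exp (-(z / 2)) ≤ 0.6075 := by
  have h₁ : Real.exp (-(z / 2)) ^ 2 ≤ 0.6075 ^ 2 := by
    have h₂ : Real.exp (-(z / 2)) ^ 2 ≤ Real.exp (-1) * Real.exp (12 / 4096) := by
      rw [← Real.exp_nat_mul, ← Real.exp_add, Real.exp_le_exp]
      push_cast
      linarith
    have h₃ : Real.exp (12 / 4096) ≤ 1.00294 := by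
      have h₄ := Real.one_sub_le_exp_neg (12 / 4096)
      rw [Real.exp_neg] at h₄
      rw [← inv_inv (Real.exp _)]
      refine (inv_anti₀ (by norm_num) h₄).trans ?_
      norm_num
    have h₅ : Real.exp (-1) < 0.36788 := Real.exp_neg_one_lt_d9.trans (by norm_num)
    have h₆ := Real.exp_pos (12 / 4096)
    nlinarith
  exact (sq_le_sq₀ (Real.exp_pos _).le (by norm_num)).1 h₁

theorem cubic_pos_of_le {w : ℝ} (hw₀ : 0 < w) (hw : w ≤ 0.6075) :
    0 < 0.998 + 0.978 * w ^ 3 - 2 * w := by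
  have h₁ : 0 ≤ (w - 0.6) ^ 2 * (w + 1.2) := by positivity
  have h₂ : (w - 0.6) ^ 2 * (w + 1.2) = w ^ 3 - 1.08 * w + 0.432 := by ring
  linarith

theorem boundedDensity_convex_of_large {r i : ℕ} (hr : 10 ≤ r) (hi : i ≤ r) {m : ℕ}
    (hm : m + 2 = 2 ^ (r + 2) + i) :
    2 * boundedDensity (r + 1) m < boundedDensity r m + boundedDensity (r + 2) m ∧
      2 * boundedDensity r m ≤ boundedDensity (r + 2) m := by
  have hr₂ : 4096 * r ≤ 10 * 2 ^ (r + 2) ∧ 4096 ≤ 2 ^ (r + 2) := by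
    clear hm hi
    induction r, hr using Nat.le_induction with
    | base => norm_num
    | succ r hr ih => rw [show r + 1 + 2 = r + 2 + 1 by omega, pow_succ]; omega
  obtain ⟨j, rfl⟩ : ∃ j, m = j + (r + 2) := by
    refine ⟨m - (r + 2), ?_⟩
    omega
  have hsmall : (r : ℝ) * (1 / 2 ^ (r + 2)) ≤ 10 / 4096 ∧ (1 : ℝ) / 2 ^ (r + 2) ≤ 1 / 4096 := by
    constructor
    · rw [mul_one_div, div_le_div_iff₀ (by positivity) (by norm_num)]
      have := hr₂.1
      rw [mul_comm (r : ℝ)]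
      exact_mod_cast this
    · rw [div_le_div_iff₀ (by positivity) (by norm_num)]
      exact_mod_cast (by omega : 1 * 4096 ≤ 1 * 2 ^ (r + 2))
  have hj : ((j : ℝ) + 2) * (1 / 2 ^ (r + 2)) = 1 + ((i : ℝ) - 2 - r) * (1 / 2 ^ (r + 2)) := by
    have : (j : ℝ) + (r + 2) + 2 = 2 ^ (r + 2) + i := by exact_mod_cast hm
    field_simp
    linarith
  have hi' : (i : ℝ) ≤ r := by exact_mod_cast hi
  have hi₀ : (0 : ℝ) ≤ i := Nat.cast_nonneg i
  have hj₀ : (0 : ℝ) ≤ j := Nat.cast_nonneg j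
  have hε₀ : (0 : ℝ) < 1 / 2 ^ (r + 2) := by positivity
  have hupper := boundedDensity_le_exp (r + 1) (j + 1)
  have hupper₀ := boundedDensity_le_exp r (j + 2)
  have hlower₀ := mul_exp_le_boundedDensity (q := r) (j := j + 2) (by omega)
    (ε := 2 * (1 / 2 ^ (r + 2))) (p := 42 / 4096) (by field_simp; ring)
    (by nlinarith) (by norm_num)
  have hlower₂ := mul_exp_le_boundedDensity (q := r + 2) (j := j) (by omega)
    (ε := 1 / 2 ^ (r + 2) / 2) (p := 12.5 / 4096) (by field_simp; ring)
    (by push_cast; nlinarith) (by norm_num)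
  rw [show j + 1 + (r + 1) = j + (r + 2) by omega] at hupper
  rw [show j + 2 + r = j + (r + 2) by omega] at hlower₀ hupper₀
  rw [show (1 : ℝ) / 2 ^ (r + 1) = 2 * (1 / 2 ^ (r + 2)) by field_simp; ring] at hupper₀
  push_cast at hupper hlower₀ hupper₀
  rw [show r + 1 + 1 = r + 2 by omega, show (j : ℝ) + 1 + 1 = j + 2 by ring] at hupper
  set ε : ℝ := 1 / 2 ^ (r + 2) with hε
  set z : ℝ := (j + 2) * ε with hz
  have hz₁ : z ≤ 1 := by nlinarith
  have hz₂ : 1 - 12 / 4096 ≤ z := by nlinarith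
  set w : ℝ := Real.exp (-(z / 2)) with hw
  have hw₀ : 0 < w := Real.exp_pos _
  have hw₂ : Real.exp (-z) = w ^ 2 := by
    rw [hw, ← Real.exp_nat_mul]
    congr 1
    push_cast
    ring
  have hw₄ : Real.exp (-((j + 2) * (2 * ε))) = w ^ 4 := by
    rw [hw, ← Real.exp_nat_mul]
    congr 1
    rw [hz]
    push_cast
    ring
  have hw₁ : w ≤ Real.exp (-(j * (ε / 2))) := by
    rw [hw, Real.exp_le_exp, hz]
    nlinarith
  have hwle : w ≤ 0.6075 := exp_neg_half_le hz₂
  rw [hw₂] at hupper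
  rw [hw₄] at hlower₀
  have h₀ : 0.978 * w ^ 4 ≤ boundedDensity r (j + (r + 2)) := by
    refine le_trans (mul_le_mul_of_nonneg_right ?_ (by positivity)) hlower₀
    rw [show ((j : ℝ) + 2) * (2 * ε) = 2 * z by rw [hz]; ring]
    nlinarith
  have h₂ : 0.998 * w ≤ boundedDensity (r + 2) (j + (r + 2)) := by
    refine le_trans (mul_le_mul ?_ hw₁ hw₀.le ?_) hlower₂
    · nlinarith
    · nlinarith
  have h₃ : boundedDensity r (j + (r + 2)) ≤ w ^ 4 := by
    rw [← hw₄]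
    refine hupper₀.trans (Real.exp_le_exp.2 ?_)
    nlinarith
  have hcubic := cubic_pos_of_le hw₀ hwle
  have hcube' : w ^ 3 ≤ 0.6075 ^ 3 := by gcongr
  constructor
  · have := mul_pos hw₀ hcubic
    linarith
  · have := mul_le_mul_of_nonneg_left hcube' hw₀.le
    linarith

theorem boundedDensity_concave_of_large {r m : ℕ} (hr : 7 ≤ r) (hm : 2 ^ r ≤ m + 1)
    (hm' : m + 1 ≤ 2 ^ (r + 1)) :
    boundedDensity r m + boundedDensity (r + 2) m < 2 * boundedDensity (r + 1) m := by
  have hr₂ : 512 * r ≤ 7 * 2 ^ (r + 2) ∧ 128 ≤ 2 ^ r ∧ r + 3 ≤ 2 ^ r := by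
    clear hm hm'
    induction r, hr using Nat.le_induction with
    | base => norm_num
    | succ r hr ih => rw [show r + 1 + 2 = r + 2 + 1 by omega, pow_succ, pow_succ 2 r]; omega
  obtain ⟨j, rfl⟩ : ∃ j, m = j + (r + 2) := ⟨m - (r + 2), by omega⟩
  have hsmall : (r : ℝ) * (1 / 2 ^ (r + 2)) ≤ 7 / 512 ∧ (1 : ℝ) / 2 ^ (r + 2) ≤ 1 / 512 := by
    constructor
    · rw [mul_one_div, div_le_div_iff₀ (by positivity) (by norm_num)]
      have := hr₂.1
      rw [mul_comm (r : ℝ)]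
      exact_mod_cast this
    · rw [div_le_div_iff₀ (by positivity) (by norm_num)]
      exact_mod_cast (by rw [pow_add]; omega : 1 * 512 ≤ 1 * 2 ^ (r + 2))
  have hz₁ : ((j : ℝ) + 1) * (1 / 2 ^ (r + 2)) ≤ 1 / 2 := by
    have h : ((j + (r + 2) + 1 : ℕ) : ℝ) ≤ (2 ^ (r + 1) : ℕ) := by exact_mod_cast hm'
    push_cast at h
    have h' : (2 : ℝ) ^ (r + 2) = 2 * 2 ^ (r + 1) := by ring
    rw [mul_one_div, div_le_div_iff₀ (by positivity) (by norm_num), h']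
    linarith [Nat.cast_nonneg (α := ℝ) r]
  have hz₂ : 1 / 4 - (r + 2) * (1 / 2 ^ (r + 2)) ≤ ((j : ℝ) + 1) * (1 / 2 ^ (r + 2)) := by
    have h : ((2 ^ r : ℕ) : ℝ) ≤ (j + (r + 2) + 1 : ℕ) := by exact_mod_cast hm
    push_cast at h
    have h' : (2 : ℝ) ^ (r + 2) = 4 * 2 ^ r := by ring
    rw [sub_le_iff_le_add, ← add_mul, mul_one_div, div_le_div_iff₀ (by norm_num) (by positivity),
      h']
    linarith
  have hj₀ : (0 : ℝ) ≤ j := Nat.cast_nonneg j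
  have hε₀ : (0 : ℝ) < 1 / 2 ^ (r + 2) := by positivity
  have hupper₀ := boundedDensity_le_exp r (j + 2)
  have hupper₂ := boundedDensity_le_exp (r + 2) j
  have hlower := mul_exp_le_boundedDensity (q := r + 1) (j := j + 1) (by omega)
    (ε := 1 / 2 ^ (r + 2)) (p := 17 / 512) rfl (by push_cast; nlinarith) (by norm_num)
  rw [show j + 2 + r = j + (r + 2) by omega,
    show (1 : ℝ) / 2 ^ (r + 1) = 2 * (1 / 2 ^ (r + 2)) by field_simp; ring] at hupper₀
  rw [show (1 : ℝ) / 2 ^ (r + 2 + 1) = 1 / 2 ^ (r + 2) / 2 by field_simp; ring] at hupper₂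
  rw [show j + 1 + (r + 1) = j + (r + 2) by omega] at hlower
  push_cast at hupper₀ hlower
  set ε : ℝ := 1 / 2 ^ (r + 2) with hε
  set z : ℝ := (j + 1) * ε with hz
  set w : ℝ := Real.exp (-(z / 2)) with hw
  have hw₀ : 0 < w := Real.exp_pos _
  have hw₁ : Real.exp (-((j + 1) * (ε / 2))) = w := by
    rw [hw, hz]
    congr 1
    ring
  have hw₂ : Real.exp (-z) = w ^ 2 := by
    rw [hw, ← Real.exp_nat_mul]
    congr 1
    push_cast
    ring
  have hw₄ : Real.exp (-(2 * z)) = w ^ 4 := by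
    rw [hw, ← Real.exp_nat_mul]
    congr 1
    push_cast
    ring
  rw [hw₁] at hupper₂
  rw [hw₂] at hlower
  have h₀ : boundedDensity r (j + (r + 2)) ≤ w ^ 4 := by
    rw [← hw₄]
    refine hupper₀.trans (Real.exp_le_exp.2 ?_)
    nlinarith
  have h₁ : 0.978 * w ^ 2 ≤ boundedDensity (r + 1) (j + (r + 2)) := by
    refine le_trans (mul_le_mul_of_nonneg_right ?_ (by positivity)) hlower
    nlinarith
  have hwge : 0.778 ≤ w := by
    have h₂ : Real.exp (-1) ≤ w ^ 4 := by
      rw [← hw₄, Real.exp_le_exp]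
      linarith
    have h₃ : (0.778 : ℝ) ^ 4 ≤ w ^ 4 :=
      le_trans (by norm_num) (Real.exp_neg_one_gt_d9.le.trans h₂)
    exact le_of_pow_le_pow_left₀ (by norm_num) hw₀.le h₃
  have hwle : w ≤ 0.892 := by
    have h₂ : 0.116 ≤ z / 2 := by linarith
    rw [hw, Real.exp_neg]
    refine (inv_anti₀ (by norm_num) ?_ : _ ≤ (1.1225 : ℝ)⁻¹).trans (by norm_num)
    refine le_trans ?_ (Real.quadratic_le_exp_of_nonneg (by linarith))
    nlinarith
  have hcubic : 0 < 1.956 * w - 1 - w ^ 3 := by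
    nlinarith [mul_nonneg (sub_nonneg.2 hwge) (sub_nonneg.2 hwle)]
  have := mul_pos hw₀ hcubic
  linarith

/-- The second difference of `q ↦ boundedCount q k` at `q = r + 1`. -/
def boundedCountDiff (r k : ℕ) : ℤ :=
  boundedCount r k + boundedCount (r + 2) k - 2 * boundedCount (r + 1) k

theorem boundedCountDiff_recurrence (r n : ℕ) :
    boundedCountDiff r (n + r + 2) =
      ∑ i ∈ Finset.range (r + 1), boundedCountDiff r (n + 1 + i) +
        (boundedCount (r + 2) n - boundedCount r (n + 1)) := by
  have h₁ := boundedCount_add_eq_sum (r + 1) (n + 1) (by omega)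
  have h₂ := boundedCount_add_eq_sum (r + 2) n (by omega)
  rw [Finset.sum_range_succ', add_zero,
    Finset.sum_congr rfl fun i _ => by rw [show n + (i + 1) = n + 1 + i by omega]] at h₂
  have h₀ : boundedCount r (n + 1 + r + 1) + boundedCount r (n + 1) =
      ∑ i ∈ Finset.range (r + 1), boundedCount r (n + 1 + i) := by
    rw [boundedCount_recurrence r (n + 1) (by omega), Finset.sum_range_succ]
    rcases Nat.eq_zero_or_pos r with rfl | hr
    · simp [boundedCount_succ_eq_sum]
    · rw [← boundedCount_add_eq_sum r (n + 1) hr]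
      ring
  simp only [boundedCountDiff, Finset.sum_add_distrib, Finset.sum_sub_distrib, ← Finset.mul_sum]
  rw [show n + 1 + (r + 1) = n + r + 2 by omega] at h₁
  rw [show n + (r + 2) = n + r + 2 by omega] at h₂
  rw [show n + 1 + r + 1 = n + r + 2 by omega] at h₀
  zify at h₀ h₁ h₂
  linarith

theorem boundedCount_le_pred (r n : ℕ) (hn : 2 ^ (r + 2) ≤ n + 2) :
    boundedCount r (n + 1) ≤ boundedCount (r + 2) n := by
  have hr : r + 3 ≤ 2 ^ (r + 2) := Nat.lt_two_pow_self
  obtain ⟨i, hi⟩ : ∃ i, n + 2 = 2 ^ (r + 2) + i := ⟨n + 2 - 2 ^ (r + 2), by omega⟩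
  induction i generalizing n with
  | zero =>
    rcases lt_or_ge r 10 with h | h
    · have := boundedCount_le_pred_of_small h
      rwa [show 2 ^ (r + 2) - 1 = n + 1 by omega, show 2 ^ (r + 2) - 2 = n by omega] at this
    · have h₁ := (boundedDensity_convex_of_large h (Nat.zero_le r) hi).2
      obtain ⟨n, rfl⟩ : ∃ m, n = m + 1 := ⟨n - 1, by omega⟩
      have h₂ := boundedDensity_antitone (r + 2) (Nat.le_succ n)
      have h₃ : (boundedCount r (n + 1 + 1) : ℝ) ≤ boundedCount (r + 2) (n + 1) := by
        rw [boundedCount_eq_boundedDensity, boundedCount_eq_boundedDensity, pow_succ, mul_assoc]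
        gcongr
        exact h₁.trans h₂
      exact_mod_cast h₃
  | succ i ih =>
    obtain ⟨n, rfl⟩ : ∃ m, n = m + 2 := ⟨n - 2, by omega⟩
    have h₁ := ih (n + 1) (by omega) (by omega)
    have h₂ : (boundedCount r (n + 1 + 1) : ℝ) ≤ boundedCount (r + 2) (n + 1) := by
      exact_mod_cast h₁
    rw [boundedCount_eq_boundedDensity, boundedCount_eq_boundedDensity, pow_succ, mul_assoc,
      mul_le_mul_iff_right₀ (by positivity)] at h₂
    obtain ⟨j, hj⟩ : ∃ j, n + 1 = j + r := ⟨n + 1 - r, by omega⟩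
    have h₃ := boundedDensity_succ_le r j
    rw [← hj] at h₃
    have h₄ := (le_boundedDensity_succ (q := r + 2) (by omega) n).1
    have h₅ : (1 : ℝ) - 2 * (1 / 2 ^ (r + 2 + 1)) = 1 - 1 / 2 ^ (r + 2) := by field_simp; ring
    have h₆ : (1 : ℝ) / 2 ^ (r + 2) ≤ 1 / 2 ^ (r + 1) := by gcongr <;> norm_num
    have h₇ : (1 : ℝ) / 2 ^ (r + 1) ≤ 1 := by
      rw [div_le_one (by positivity)]
      exact one_le_pow₀ (by norm_num)
    rw [h₅] at h₄
    have h₈ := boundedDensity_nonneg r (n + 1)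
    have h₉ := boundedDensity_nonneg (r + 2) n
    have h₁₀ : (boundedCount r (n + 1 + 1 + 1) : ℝ) ≤ boundedCount (r + 2) (n + 1 + 1) := by
      rw [boundedCount_eq_boundedDensity, boundedCount_eq_boundedDensity, pow_succ _ (n + 1),
        mul_assoc]
      gcongr
      nlinarith
    exact_mod_cast h₁₀

theorem boundedCountDiff_pos (r k : ℕ) (hk : 2 ^ (r + 2) ≤ k + 1) : 0 < boundedCountDiff r k := by
  have hr : r + 3 ≤ 2 ^ (r + 2) := Nat.lt_two_pow_self
  induction k using Nat.strong_induction_on with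
  | _ k ih =>
    rcases Nat.lt_or_ge (2 ^ (r + 2) + r) (k + 1) with h | h
    · obtain ⟨n, rfl⟩ : ∃ n, k = n + r + 2 := ⟨k - r - 2, by omega⟩
      rw [boundedCountDiff_recurrence]
      have h₁ : 0 < ∑ i ∈ Finset.range (r + 1), boundedCountDiff r (n + 1 + i) := by
        refine Finset.sum_pos (fun i hi => ?_) (by simp)
        rw [Finset.mem_range] at hi
        exact ih _ (by omega) (by omega)
      have h₂ := boundedCount_le_pred r n (by omega)
      zify at h₂
      linarith
    · have h₁ : 2 * boundedCount (r + 1) k < boundedCount r k + boundedCount (r + 2) k := by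
        rcases lt_or_ge r 10 with hr | hr
        · exact boundedCount_convex_of_small hr hk (by omega)
        · obtain ⟨m, rfl⟩ : ∃ m, k = m + 1 := ⟨k - 1, by omega⟩
          have h₁ := (boundedDensity_convex_of_large (i := m + 2 - 2 ^ (r + 2)) (m := m) hr
            (by omega) (by omega)).1
          have h₂ := mul_lt_mul_of_pos_left h₁ (show (0 : ℝ) < 2 ^ m by positivity)
          rw [mul_add, mul_left_comm, ← boundedCount_eq_boundedDensity,
            ← boundedCount_eq_boundedDensity, ← boundedCount_eq_boundedDensity] at h₂
          exact_mod_cast h₂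
      zify at h₁
      rw [boundedCountDiff]
      linarith

theorem pred_le_boundedCount (r n : ℕ) (hn : n + 2 ≤ 2 ^ r) :
    boundedCount (r + 2) n ≤ boundedCount r (n + 1) := by
  rcases n with _ | n
  · rcases r with _ | r
    · simp at hn
    · rw [boundedCount_zero_right, boundedCount_succ_of_lt (r + 1) 0 (by omega), pow_zero]
  · have h₁ := one_sub_le_boundedDensity r (n + 1)
    have h₂ : ((n + 1 : ℕ) + 2 : ℝ) * (1 / 2 ^ (r + 1)) ≤ 1 / 2 := by
      rw [mul_one_div, div_le_div_iff₀ (by positivity) (by norm_num), pow_succ]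
      have : ((n + 1 + 2 : ℕ) : ℝ) ≤ (2 ^ r : ℕ) := by exact_mod_cast hn
      push_cast at this ⊢
      linarith
    have h₃ := boundedDensity_le_one (r + 2) n
    have h₄ : (boundedCount (r + 2) (n + 1) : ℝ) ≤ boundedCount r (n + 1 + 1) := by
      rw [boundedCount_eq_boundedDensity, boundedCount_eq_boundedDensity, pow_succ, mul_assoc]
      gcongr
      linarith
    exact_mod_cast h₄

theorem boundedCountDiff_of_le {r k : ℕ} (hk : k ≤ r) : boundedCountDiff r k = 0 := by
  rw [boundedCountDiff]
  rcases k with _ | k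
  · simp [boundedCount_zero_right]
  · rw [boundedCount_succ_of_lt _ _ (by omega), boundedCount_succ_of_lt _ _ (by omega),
      boundedCount_succ_of_lt _ _ (by omega)]
    ring

theorem boundedCountDiff_neg {r k : ℕ} (hr : 1 ≤ r) (hk : r < k) (hk' : k ≤ 2 ^ (r + 1)) :
    boundedCountDiff r k < 0 := by
  suffices h : boundedCount r k + boundedCount (r + 2) k < 2 * boundedCount (r + 1) k by
    zify at h
    rw [boundedCountDiff]
    linarith
  rcases lt_or_ge r 7 with hr₇ | hr₇
  · exact boundedCount_concave_of_small hr hr₇ hk hk'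
  rcases le_total (2 ^ r) k with h | h
  · obtain ⟨m, rfl⟩ : ∃ m, k = m + 1 := ⟨k - 1, by omega⟩
    have h₁ := boundedDensity_concave_of_large hr₇ h hk'
    have h₂ := mul_lt_mul_of_pos_left h₁ (show (0 : ℝ) < 2 ^ m by positivity)
    rw [mul_add, mul_left_comm, ← boundedCount_eq_boundedDensity,
      ← boundedCount_eq_boundedDensity, ← boundedCount_eq_boundedDensity] at h₂
    exact_mod_cast h₂
  suffices H : boundedCountDiff r k < 0 by
    rw [boundedCountDiff] at H
    zify
    linarith
  clear hk'
  induction k using Nat.strong_induction_on with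
  | _ k ih =>
    rcases Nat.eq_or_lt_of_le (Nat.succ_le_of_lt hk) with rfl | hk
    · have h₁ := boundedCount_recurrence r 0 (by omega)
      obtain ⟨s, rfl⟩ : ∃ s, r = s + 1 := ⟨r - 1, by omega⟩
      rw [zero_add, boundedCount_zero_right, boundedCount_succ_of_lt _ s (by omega)] at h₁
      rw [boundedCountDiff, Nat.succ_eq_add_one,
        boundedCount_succ_of_lt (s + 1 + 2) (s + 1) (by omega),
        boundedCount_succ_of_lt (s + 1 + 1) (s + 1) (by omega)]
      zify at h₁
      push_cast
      rw [pow_succ]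
      linarith
    · obtain ⟨n, rfl⟩ : ∃ n, k = n + r + 2 := ⟨k - r - 2, by omega⟩
      rw [boundedCountDiff_recurrence]
      have h₁ : ∑ i ∈ Finset.range (r + 1), boundedCountDiff r (n + 1 + i) < 0 := by
        refine Finset.sum_neg' (fun i hi => ?_) ⟨r, by simp, ih _ (by omega) (by omega) (by omega)⟩
        rw [Finset.mem_range] at hi
        rcases Nat.lt_or_ge r (n + 1 + i) with h' | h'
        · exact (ih _ (by omega) h' (by omega)).le
        · exact (boundedCountDiff_of_le h').le
      have h₂ := pred_le_boundedCount r n (by omega)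
      zify at h₂
      linarith

theorem maxPartCompositions_sub (k r : ℕ) :
    (maxPartCompositions k (r + 2) : ℤ) - maxPartCompositions k (r + 1) =
      boundedCountDiff r k := by
  have h₁ := maxPartCompositions_add_boundedCount k r
  have h₂ := maxPartCompositions_add_boundedCount k (r + 1)
  zify at h₁ h₂
  rw [boundedCountDiff]
  linarith

theorem maxPartCompositions_lt_succ {k q : ℕ} (hq : 1 ≤ q) (hk : 2 ^ (q + 1) ≤ k + 1) :
    maxPartCompositions k q < maxPartCompositions k (q + 1) := by
  obtain ⟨r, rfl⟩ : ∃ r, q = r + 1 := ⟨q - 1, by omega⟩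
  have h₁ := maxPartCompositions_sub k r
  have h₂ := boundedCountDiff_pos r k hk
  zify
  linarith

theorem maxPartCompositions_succ_lt {k q : ℕ} (hq : 2 ≤ q) (hk : q ≤ k) (hk' : k ≤ 2 ^ q) :
    maxPartCompositions k (q + 1) < maxPartCompositions k q := by
  obtain ⟨r, rfl⟩ : ∃ r, q = r + 1 := ⟨q - 1, by omega⟩
  have h₁ := maxPartCompositions_sub k r
  have h₂ := boundedCountDiff_neg (by omega : 1 ≤ r) (by omega : r < k) hk'
  zify
  linarith

theorem maxPartCompositions_lt_of_lt_log {k q q' : ℕ} (hq : 1 ≤ q) (hqq' : q < q')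
    (hq' : q' ≤ Nat.log 2 k) : maxPartCompositions k q < maxPartCompositions k q' := by
  have hk : k ≠ 0 := by
    rintro rfl
    simp at hq'
    omega
  induction q', hqq' using Nat.le_induction with
  | base => exact maxPartCompositions_lt_succ hq ((Nat.pow_le_of_le_log hk hq').trans (by omega))
  | succ q' h ih =>
    exact (ih (by omega)).trans (maxPartCompositions_lt_succ (by omega)
      ((Nat.pow_le_of_le_log hk hq').trans (by omega)))

theorem maxPartCompositions_lt_of_log_lt {k q q' : ℕ} (hq : Nat.log 2 k < q) (hqq' : q < q')
    (hq' : q' ≤ k) : maxPartCompositions k q' < maxPartCompositions k q := by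
  have hlog : 1 ≤ Nat.log 2 k := Nat.log_pos (by norm_num) (by omega)
  have hlt {p : ℕ} (hp : Nat.log 2 k < p) : k ≤ 2 ^ p :=
    (Nat.lt_pow_of_log_lt (by norm_num) hp).le
  induction q', hqq' using Nat.le_induction with
  | base => exact maxPartCompositions_succ_lt (by omega) (by omega) (hlt hq)
  | succ q' h ih =>
    exact (maxPartCompositions_succ_lt (by omega) (by omega) (hlt (by omega))).trans
      (ih (by omega))

theorem maxPartCompositions_le_max {k q : ℕ} (hq : 1 ≤ q) (hq' : q ≤ k) :
    maxPartCompositions k q ≤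
      max (maxPartCompositions k (Nat.log 2 k)) (maxPartCompositions k (Nat.log 2 k + 1)) := by
  rcases lt_trichotomy q (Nat.log 2 k) with h | rfl | h
  · exact le_max_of_le_left (maxPartCompositions_lt_of_lt_log hq h le_rfl).le
  · exact le_max_left _ _
  · rcases (Nat.succ_le_of_lt h).eq_or_lt with rfl | h
    · exact le_max_right _ _
    · exact le_max_of_le_right (maxPartCompositions_lt_of_log_lt (by omega) h hq').le

theorem maxPartCompositions_unimodal {k : ℕ} (hk : 1 ≤ k) :
    ∃ m : ℕ, 1 ≤ m ∧ m ≤ k ∧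
      (∀ q q' : ℕ, 1 ≤ q → q ≤ q' → q' ≤ m →
        maxPartCompositions k q ≤ maxPartCompositions k q') ∧
      (∀ q q' : ℕ, m ≤ q → q ≤ q' → q' ≤ k →
        maxPartCompositions k q' ≤ maxPartCompositions k q) := by
  have hlog : Nat.log 2 k < k := Nat.log_lt_self 2 (by omega)
  have hinc {q q' : ℕ} (hq : 1 ≤ q) (h : q ≤ q') (hq' : q' ≤ Nat.log 2 k) :
      maxPartCompositions k q ≤ maxPartCompositions k q' := by
    rcases h.eq_or_lt with rfl | h
    · rfl
    · exact (maxPartCompositions_lt_of_lt_log hq h hq').le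
  have hdec {q q' : ℕ} (hq : Nat.log 2 k < q) (h : q ≤ q') (hq' : q' ≤ k) :
      maxPartCompositions k q' ≤ maxPartCompositions k q := by
    rcases h.eq_or_lt with rfl | h
    · rfl
    · exact (maxPartCompositions_lt_of_log_lt hq h hq').le
  by_cases h : 1 ≤ Nat.log 2 k ∧
      maxPartCompositions k (Nat.log 2 k + 1) ≤ maxPartCompositions k (Nat.log 2 k)
  · refine ⟨Nat.log 2 k, h.1, hlog.le, fun q q' => hinc, fun q q' hq hqq' hq' => ?_⟩
    rcases hq.eq_or_lt with rfl | hq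
    · rcases hqq'.eq_or_lt with rfl | hqq'
      · rfl
      · exact (hdec (Nat.lt_succ_self _) hqq' hq').trans h.2
    · exact hdec hq hqq' hq'
  · refine ⟨Nat.log 2 k + 1, by omega, hlog, fun q q' hq hqq' hq' => ?_,
      fun q q' hq => hdec hq⟩
    rcases hq'.eq_or_lt with rfl | hq'
    · rcases hqq'.eq_or_lt with rfl | hqq'
      · rfl
      · refine (hinc hq (Nat.le_of_lt_succ hqq') le_rfl).trans ?_
        have h₁ : 1 ≤ Nat.log 2 k := by omega
        exact (not_le.1 fun h₂ => h ⟨h₁, h₂⟩).le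
    · exact hinc hq hqq' (by omega)

theorem odlyzko_richmond :
    (∀ k : ℕ, 1 ≤ k →
      -- unimodality in q
      (∃ m : ℕ, 1 ≤ m ∧ m ≤ k ∧
        (∀ q q' : ℕ, 1 ≤ q → q ≤ q' → q' ≤ m →
          maxPartCompositions k q ≤ maxPartCompositions k q') ∧
        (∀ q q' : ℕ, m ≤ q → q ≤ q' → q' ≤ k →
          maxPartCompositions k q' ≤ maxPartCompositions k q)) ∧
      -- the maximum is attained at ⌊log₂ k⌋ or ⌊log₂ k⌋ + 1 ...
      ((∀ q' : ℕ, 1 ≤ q' → q' ≤ k →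
          maxPartCompositions k q' ≤ maxPartCompositions k (Nat.log 2 k)) ∨
        (∀ q' : ℕ, 1 ≤ q' → q' ≤ k →
          maxPartCompositions k q' ≤ maxPartCompositions k (Nat.log 2 k + 1))) ∧
      -- ... and at no other value of q
      (∀ q : ℕ, 1 ≤ q → q ≤ k →
        (∀ q' : ℕ, 1 ≤ q' → q' ≤ k →
          maxPartCompositions k q' ≤ maxPartCompositions k q) →
        q = Nat.log 2 k ∨ q = Nat.log 2 k + 1)) ∧
    -- each of the two locations attains the maximum infinitely often
    {k : ℕ | 1 ≤ k ∧ ∀ q' : ℕ, 1 ≤ q' → q' ≤ k →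
      maxPartCompositions k q' ≤ maxPartCompositions k (Nat.log 2 k)}.Infinite ∧
    {k : ℕ | 1 ≤ k ∧ ∀ q' : ℕ, 1 ≤ q' → q' ≤ k →
      maxPartCompositions k q' ≤ maxPartCompositions k (Nat.log 2 k + 1)}.Infinite := by
  refine ⟨fun k hk => ⟨maxPartCompositions_unimodal hk, ?_, fun q hq hqk hmax => ?_⟩, ?_, ?_⟩
  · rcases le_total (maxPartCompositions k (Nat.log 2 k))
      (maxPartCompositions k (Nat.log 2 k + 1)) with h | h
    · exact .inr fun q hq hq' => (maxPartCompositions_le_max hq hq').trans_eq (max_eq_right h)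
    · exact .inl fun q hq hq' => (maxPartCompositions_le_max hq hq').trans_eq (max_eq_left h)
  · have hlog : Nat.log 2 k < k := Nat.log_lt_self 2 (by omega)
    rcases lt_trichotomy q (Nat.log 2 k) with h | h | h
    · exact absurd (hmax (Nat.log 2 k) (by omega) hlog.le)
        (maxPartCompositions_lt_of_lt_log hq h le_rfl).not_ge
    · exact .inl h
    · rcases (Nat.succ_le_of_lt h).eq_or_lt with h | h
      · exact .inr h.symm
      · exact absurd (hmax (Nat.log 2 k + 1) (by omega) hlog)
          (maxPartCompositions_lt_of_log_lt (Nat.lt_succ_self _) h hqk).not_ge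
  · refine Set.infinite_of_injective_forall_mem (f := fun n : ℕ => 2 ^ (n + 2))
      (fun a b h => by simpa using h) fun n => ⟨Nat.one_le_two_pow, fun q hq hq' => ?_⟩
    refine (maxPartCompositions_le_max hq hq').trans_eq (max_eq_left ?_)
    rw [Nat.log_pow (by norm_num)]
    exact (maxPartCompositions_succ_lt (by omega) Nat.lt_two_pow_self.le le_rfl).le
  · have hpos (n : ℕ) : n + 2 < 2 ^ (n + 2) := Nat.lt_two_pow_self
    refine Set.infinite_of_injective_forall_mem (f := fun n : ℕ => 2 ^ (n + 2) - 1)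
      (fun a b h => ?_) fun n => ⟨?_, fun q hq hq' => ?_⟩
    · have ha := hpos a
      have hb := hpos b
      have h' : 2 ^ (a + 2) = 2 ^ (b + 2) := by
        simp only at h
        omega
      simpa using h'
    · have := hpos n
      omega
    · refine (maxPartCompositions_le_max hq hq').trans_eq (max_eq_right ?_)
      have h := hpos n
      have h₄ : 2 ^ (n + 2) = 4 * 2 ^ n := by ring
      have hlog : Nat.log 2 (2 ^ (n + 2) - 1) = n + 1 :=
        Nat.log_eq_of_pow_le_of_lt_pow (by omega) (by omega)
      rw [hlog]
      exact (maxPartCompositions_lt_succ (by omega) (by omega)).le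
end

section
/- The central trinomial coefficient satisfies C(n,3,n) \sim 3^{n+1/2}/(2\sqrt{\pi n}) as n \to \infty; that is, the limit as n \to \infty of C(n,3,n) \cdot 2\sqrt{\pi n} / 3^{n+1/2} equals 1. -/
open Filter

open MeasureTheory

open Complex in
/-- Cauchy's coefficient formula on the unit circle. -/
theorem Polynomial.integral_eval_exp_mul_exp_neg (p : Polynomial ℂ) (n : ℕ) :
    ∫ t in -Real.pi..Real.pi, p.eval (exp (t * I)) * exp (-(n * (t * I))) =
      2 * Real.pi * p.coeff n := by
  induction p using Polynomial.induction_on' with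
  | add p q hp hq =>
    simp only [Polynomial.eval_add, add_mul, Polynomial.coeff_add, mul_add]
    rw [intervalIntegral.integral_add, hp, hq] <;>
      exact Continuous.intervalIntegrable (by fun_prop) _ _
  | monomial k a =>
    have hexp (t : ℝ) : (Polynomial.monomial k a).eval (exp (t * I)) * exp (-(n * (t * I))) =
        a * exp (((k : ℂ) - n) * I * t) := by
      rw [Polynomial.eval_monomial, ← exp_nat_mul, mul_assoc, ← exp_add]
      ring_nf
    simp only [hexp, intervalIntegral.integral_const_mul, Polynomial.coeff_monomial]
    split_ifs with hkn
    · subst hkn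
      simp
      ring
    · have hc : ((k : ℂ) - n) * I ≠ 0 :=
        mul_ne_zero (sub_ne_zero.2 (by exact_mod_cast hkn)) I_ne_zero
      have hperiod : exp (((k : ℂ) - n) * I * Real.pi) =
          exp (((k : ℂ) - n) * I * (-Real.pi : ℝ)) := by
        rw [exp_eq_exp_iff_exists_int]
        exact ⟨k - n, by push_cast; ring⟩
      rw [integral_exp_mul_complex hc, hperiod]
      simp

open Complex in
/-- The central trinomial coefficient as a real integral. -/
theorem integral_one_add_two_mul_cos_pow (n : ℕ) :
    ∫ t in -Real.pi..Real.pi, (1 + 2 * Real.cos t) ^ n = 2 * Real.pi * polyCoeff n 3 n := by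
  have hcoeff : (((1 + Polynomial.X + Polynomial.X ^ 2 : Polynomial ℂ) ^ n).coeff n) =
      (polyCoeff n 3 n : ℂ) := by
    rw [polyCoeff, ← eq_natCast (Nat.castRingHom ℂ), ← Polynomial.coeff_map]
    simp [Finset.sum_range_succ]
  have h := Polynomial.integral_eval_exp_mul_exp_neg
    ((1 + Polynomial.X + Polynomial.X ^ 2 : Polynomial ℂ) ^ n) n
  rw [hcoeff] at h
  have hintegrand (t : ℝ) :
      ((1 + Polynomial.X + Polynomial.X ^ 2 : Polynomial ℂ) ^ n).eval (exp (t * I)) *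
        exp (-(n * (t * I))) = (((1 + 2 * Real.cos t) ^ n : ℝ) : ℂ) := by
    have hinv : exp (t * I) * exp (-(t * I)) = 1 := by rw [← exp_add]; simp
    rw [← mul_neg, exp_nat_mul, Polynomial.eval_pow, ← mul_pow]
    push_cast
    rw [two_cos, ← neg_mul_eq_neg_mul]
    congr 1
    simp only [Polynomial.eval_add, Polynomial.eval_one, Polynomial.eval_X, Polynomial.eval_pow]
    linear_combination (1 + exp (t * I)) * hinv
  simp only [hintegrand, intervalIntegral.integral_ofReal] at h
  exact_mod_cast h

/-- A Gaussian bound for the normalised integrand on the whole period. -/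
theorem abs_one_add_two_mul_cos_div_three_le {t : ℝ} (ht : |t| ≤ Real.pi) :
    |(1 + 2 * Real.cos t) / 3| ≤ Real.exp (-(1 / 10) * t ^ 2) := by
  have hpi : Real.pi ^ 2 < 10 := by nlinarith [Real.pi_lt_d2, Real.pi_pos]
  have hsq : t ^ 2 ≤ Real.pi ^ 2 := sq_le_sq.2 (by rwa [abs_of_pos Real.pi_pos])
  rw [abs_le]
  constructor
  · have hexp : 1 / 3 ≤ Real.exp (-(1 / 10) * t ^ 2) := calc
      (1 / 3 : ℝ) ≤ (Real.exp 1)⁻¹ := by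
        rw [one_div]
        exact inv_anti₀ (Real.exp_pos 1) (by linarith [Real.exp_one_lt_d9])
      _ = Real.exp (-1) := (Real.exp_neg 1).symm
      _ ≤ _ := Real.exp_le_exp.2 (by linarith)
    linarith [Real.neg_one_le_cos t]
  · have hcos := Real.cos_le_one_sub_mul_cos_sq ht
    have hc : 3 / 20 * t ^ 2 ≤ 2 / Real.pi ^ 2 * t ^ 2 := by
      refine mul_le_mul_of_nonneg_right ?_ (sq_nonneg t)
      rw [le_div_iff₀ (by positivity)]
      linarith
    linarith [Real.add_one_le_exp (-(1 / 10) * t ^ 2)]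

/-- Pointwise convergence of the rescaled integrand to a Gaussian. -/
theorem tendsto_one_add_two_mul_cos_div_three_pow (s : ℝ) :
    Tendsto (fun n : ℕ => ((1 + 2 * Real.cos (s / √n)) / 3) ^ n) atTop
      (nhds (Real.exp (-(1 / 3) * s ^ 2))) := by
  have hsinc : Tendsto (fun n : ℕ => -(1 / 3) * s ^ 2 * Real.sinc (s / √n / 2) ^ 2) atTop
      (nhds (-(1 / 3) * s ^ 2)) := by
    have harg : Tendsto (fun n : ℕ => s / √(n : ℝ) / 2) atTop (nhds 0) := by
      simpa using (tendsto_const_nhds.div_atTop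
        (Real.tendsto_sqrt_atTop.comp tendsto_natCast_atTop_atTop)).div_const 2
    have hone := ((Real.continuous_sinc.tendsto 0).comp harg).pow 2
    rw [Real.sinc_zero, one_pow] at hone
    simpa only [mul_one, Function.comp_apply] using hone.const_mul (-(1 / 3) * s ^ 2)
  have hlim : Tendsto (fun n : ℕ => n * ((2 * Real.cos (s / √n) - 2) / 3)) atTop
      (nhds (-(1 / 3) * s ^ 2)) := by
    refine hsinc.congr' ?_
    filter_upwards [eventually_gt_atTop 0] with n hn
    have hn' : (0 : ℝ) < n := by exact_mod_cast hn
    have hsq : √(n : ℝ) ^ 2 = n := Real.sq_sqrt hn'.le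
    have hs0 : √(n : ℝ) ≠ 0 := (Real.sqrt_pos.2 hn').ne'
    rcases eq_or_ne s 0 with rfl | hs
    · simp
    rw [Real.sinc_of_ne_zero (by positivity)]
    have hcos : Real.cos (s / √n) = 1 - 2 * Real.sin (s / √n / 2) ^ 2 := by
      rw [← Real.cos_two_mul_eq_one_sub]
      ring_nf
    rw [hcos]
    nth_rw 3 [← hsq]
    field_simp
    ring
  refine (Real.tendsto_one_add_pow_exp_of_tendsto hlim).congr fun n => ?_
  congr 1
  ring

/-- Laplace's method for the central trinomial integral. -/
theorem tendsto_sqrt_mul_integral_one_add_two_mul_cos_div_three_pow :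
    Tendsto (fun n : ℕ =>
        √n * ∫ t in -Real.pi..Real.pi, ((1 + 2 * Real.cos t) / 3) ^ n) atTop
      (nhds √(3 * Real.pi)) := by
  have hgauss : ∫ s : ℝ, Real.exp (-(1 / 3) * s ^ 2) = √(3 * Real.pi) := by
    rw [integral_gaussian]
    congr 1
    ring
  rw [← hgauss]
  have hdom : Tendsto (fun n : ℕ => ∫ s : ℝ, (Set.Ioc (-(Real.pi * √n)) (Real.pi * √n)).indicator
      (fun s => ((1 + 2 * Real.cos (s / √n)) / 3) ^ n) s) atTop
      (nhds (∫ s : ℝ, Real.exp (-(1 / 3) * s ^ 2))) := by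
    refine tendsto_integral_filter_of_dominated_convergence
      (fun s => Real.exp (-(1 / 10) * s ^ 2)) ?_ ?_ (integrable_exp_neg_mul_sq (by norm_num)) ?_
    · refine Eventually.of_forall fun n => ?_
      exact (Continuous.aestronglyMeasurable (by fun_prop)).indicator measurableSet_Ioc
    · filter_upwards [eventually_gt_atTop 0] with n hn
      refine Eventually.of_forall fun s => ?_
      have hn' : (0 : ℝ) < n := by exact_mod_cast hn
      have hs0 : 0 < √(n : ℝ) := Real.sqrt_pos.2 hn'
      by_cases hs : s ∈ Set.Ioc (-(Real.pi * √n)) (Real.pi * √n)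
      · have hle : |s / √n| ≤ Real.pi := by
          rw [abs_div, abs_of_pos hs0, div_le_iff₀ hs0]
          exact abs_le.2 ⟨hs.1.le, hs.2⟩
        rw [Set.indicator_of_mem hs, Real.norm_eq_abs, abs_pow]
        calc _ ≤ Real.exp (-(1 / 10) * (s / √n) ^ 2) ^ n := by
              gcongr
              exact abs_one_add_two_mul_cos_div_three_le hle
          _ = _ := by
              rw [← Real.exp_nat_mul, div_pow, Real.sq_sqrt hn'.le]
              congr 1
              field_simp
      · rw [Set.indicator_of_notMem hs, norm_zero]
        positivity
    · refine Eventually.of_forall fun s => ?_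
      refine (tendsto_one_add_two_mul_cos_div_three_pow s).congr' ?_
      have hlarge : Tendsto (fun n : ℕ => Real.pi * √(n : ℝ)) atTop atTop :=
        (Real.tendsto_sqrt_atTop.comp tendsto_natCast_atTop_atTop).const_mul_atTop Real.pi_pos
      filter_upwards [hlarge.eventually_gt_atTop |s|] with n hn
      have hs : s ∈ Set.Ioc (-(Real.pi * √n)) (Real.pi * √n) :=
        ⟨(abs_lt.1 hn).1, (abs_lt.1 hn).2.le⟩
      rw [Set.indicator_of_mem hs]
  refine hdom.congr' ?_
  filter_upwards [eventually_gt_atTop 0] with n hn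
  have hs0 : 0 < √(n : ℝ) := Real.sqrt_pos.2 (by exact_mod_cast hn)
  rw [integral_indicator measurableSet_Ioc,
    ← intervalIntegral.integral_of_le (by nlinarith [mul_pos Real.pi_pos hs0]),
    intervalIntegral.integral_comp_div (fun t => ((1 + 2 * Real.cos t) / 3) ^ n) hs0.ne',
    neg_div, mul_div_cancel_right₀ _ hs0.ne', smul_eq_mul]

theorem central_trinomial_asymptotic :
    Tendsto
      (fun n : ℕ =>
        (polyCoeff n 3 n : ℝ) * (2 * Real.sqrt (Real.pi * n)) /
          (3 : ℝ) ^ ((n : ℝ) + 1 / 2))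
      atTop (nhds 1) := by
  have h := tendsto_sqrt_mul_integral_one_add_two_mul_cos_div_three_pow.div_const √(3 * Real.pi)
  rw [div_self (by positivity)] at h
  refine h.congr fun n => ?_
  have hpi : √Real.pi ^ 2 = Real.pi := Real.sq_sqrt Real.pi_pos.le
  simp only [div_pow, intervalIntegral.integral_div]
  rw [integral_one_add_two_mul_cos_pow, Real.rpow_add (by norm_num), Real.rpow_natCast,
    ← Real.sqrt_eq_rpow, Real.sqrt_mul (by norm_num), Real.sqrt_mul Real.pi_pos.le]
  nth_rw 1 [← hpi]
  field_simp
end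

section
/- For every fixed integer q \ge 2, the maximal polynomial coefficient satisfies \max_{0 \le k \le (q-1)n} C(n,q,k) \sim q^n \sqrt{6/((q^2-1)\pi n)} as n \to \infty; that is, the limit as n \to \infty of (\max_{0 \le k \le (q-1)n} C(n,q,k)) \cdot \sqrt{(q^2-1)\pi n / 6} / q^n equals 1. -/
open Filter

open MeasureTheory

/-- The characteristic function of the uniform distribution on the `q` points
`j - (q - 1) / 2`, `0 ≤ j < q`. -/
noncomputable def centeredUniformChar (q : ℕ) (t : ℝ) : ℝ :=
  (∑ j ∈ Finset.range q, Real.cos ((j - (q - 1) / 2) * t)) / q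

lemma continuous_centeredUniformChar (q : ℕ) : Continuous (centeredUniformChar q) := by
  unfold centeredUniformChar
  fun_prop

lemma sum_sq_sub_center (q : ℕ) :
    ∑ j ∈ Finset.range q, ((j : ℝ) - (q - 1) / 2) ^ 2 = q * ((q : ℝ) ^ 2 - 1) / 12 := by
  have h (a : ℝ) : ∑ j ∈ Finset.range q, ((j : ℝ) - a) ^ 2 =
      q * (q - 1) * (2 * q - 1) / 6 - a * q * (q - 1) + q * a ^ 2 := by
    induction q with
    | zero => simp
    | succ q ih => rw [Finset.sum_range_succ, ih]; push_cast; ring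
  rw [h]
  ring

lemma abs_centeredUniformChar_le {q : ℕ} (hq : 2 ≤ q) {t : ℝ} (ht : |t| ≤ Real.pi) :
    |centeredUniformChar q t| ≤ Real.exp (-(1 / (q * Real.pi ^ 2)) * t ^ 2) := by
  have hq0 : (0 : ℝ) < q := by positivity
  have hpi := Real.pi_pos
  have hcos : |Real.cos (t / 2)| ≤ 1 - 2 / Real.pi ^ 2 * (t / 2) ^ 2 := by
    obtain ⟨h1, h2⟩ := abs_le.mp ht
    rw [abs_of_nonneg (Real.cos_nonneg_of_neg_pi_div_two_le_of_le (by linarith) (by linarith))]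
    exact Real.cos_le_one_sub_mul_cos_sq (abs_le.mpr ⟨by linarith, by linarith⟩)
  have hsum : |∑ j ∈ Finset.range q, Real.cos ((j - (q - 1) / 2) * t)| ≤
      2 * |Real.cos (t / 2)| + (q - 2) := by
    rw [← Finset.sum_range_add_sum_Ico _ hq]
    refine (abs_add_le _ _).trans (add_le_add ?_ ?_)
    · rw [Finset.sum_range_succ, Finset.sum_range_one, Real.cos_add_cos, abs_mul, abs_mul, abs_two]
      have h : Real.cos (((((0 : ℕ) : ℝ) - (q - 1) / 2) * t - (((1 : ℕ) : ℝ) - (q - 1) / 2) * t) / 2)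
          = Real.cos (t / 2) := by
        rw [← Real.cos_neg]; congr 1; push_cast; ring
      rw [h]
      nlinarith [abs_nonneg (Real.cos (t / 2)), Real.abs_cos_le_one
        (((((0 : ℕ) : ℝ) - (q - 1) / 2) * t + (((1 : ℕ) : ℝ) - (q - 1) / 2) * t) / 2)]
    · refine (Finset.abs_sum_le_sum_abs _ _).trans ?_
      refine (Finset.sum_le_card_nsmul _ _ 1 fun j _ => Real.abs_cos_le_one _).trans ?_
      simp [Nat.cast_sub hq]
  rw [centeredUniformChar, abs_div, abs_of_pos hq0, div_le_iff₀ hq0]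
  refine hsum.trans ?_
  have hexp := Real.add_one_le_exp (-(1 / (q * Real.pi ^ 2)) * t ^ 2)
  calc _ ≤ 2 * (1 - 2 / Real.pi ^ 2 * (t / 2) ^ 2) + ((q : ℝ) - 2) := by gcongr
    _ = (-(1 / (q * Real.pi ^ 2)) * t ^ 2 + 1) * q := by field_simp; ring
    _ ≤ _ := by gcongr

lemma tendsto_mul_cos_div_sqrt_sub_one (a : ℝ) :
    Tendsto (fun n : ℕ => (n : ℝ) * (Real.cos (a / √n) - 1)) atTop (nhds (-(a ^ 2) / 2)) := by
  have hx : Tendsto (fun n : ℕ => a / √(n : ℝ)) atTop (nhds 0) :=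
    (Real.tendsto_sqrt_atTop.comp tendsto_natCast_atTop_atTop).const_div_atTop a
  rw [tendsto_iff_norm_sub_tendsto_zero]
  have hlim : Tendsto (fun n : ℕ => a ^ 4 * (5 / 96) / (n : ℝ)) atTop (nhds 0) :=
    tendsto_natCast_atTop_atTop.const_div_atTop _
  refine squeeze_zero' (Eventually.of_forall fun _ => norm_nonneg _) ?_ hlim
  filter_upwards [hx.eventually (Metric.ball_mem_nhds 0 one_pos), eventually_gt_atTop 0]
    with n hn hn0
  have hn0' : (0 : ℝ) < n := by exact_mod_cast hn0
  have hb := Real.cos_bound (x := a / √n) (by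
    rw [Real.dist_0_eq_abs] at hn
    exact hn.le)
  have hsq : √(n : ℝ) ^ 2 = n := Real.sq_sqrt hn0'.le
  have e1 : (n : ℝ) * (Real.cos (a / √n) - 1) - -(a ^ 2) / 2 =
      n * (Real.cos (a / √n) - (1 - (a / √n) ^ 2 / 2)) := by
    rw [div_pow, hsq]; field_simp; ring
  have e2 : |a / √(n : ℝ)| ^ 4 = a ^ 4 / n ^ 2 := by
    rw [Even.pow_abs (by decide), div_pow]; congr 1
    rw [show √(n : ℝ) ^ 4 = (√(n : ℝ) ^ 2) ^ 2 by ring, hsq]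
  rw [e2] at hb
  rw [e1, Real.norm_eq_abs, abs_mul, abs_of_pos hn0']
  calc _ ≤ (n : ℝ) * (a ^ 4 / n ^ 2 * (5 / 96)) := by gcongr
    _ = _ := by field_simp

lemma tendsto_centeredUniformChar_pow {q : ℕ} (hq : 0 < q) (s : ℝ) :
    Tendsto (fun n : ℕ => centeredUniformChar q (s / √n) ^ n) atTop
      (nhds (Real.exp (-(((q : ℝ) ^ 2 - 1) / 24) * s ^ 2))) := by
  have hq0 : (q : ℝ) ≠ 0 := by positivity
  have key := Real.tendsto_one_add_pow_exp_of_tendsto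
    (g := fun n : ℕ => centeredUniformChar q (s / √n) - 1)
    (t := -(((q : ℝ) ^ 2 - 1) / 24) * s ^ 2) ?_
  · simpa using key
  have h := (tendsto_finsetSum (Finset.range q) fun j _ =>
    tendsto_mul_cos_div_sqrt_sub_one (((j : ℝ) - (q - 1) / 2) * s)).div_const (q : ℝ)
  convert h using 1
  · funext n
    rw [← Finset.mul_sum, Finset.sum_sub_distrib, centeredUniformChar]
    simp only [mul_div_assoc, Finset.sum_const, Finset.card_range, nsmul_eq_mul, mul_one]
    rw [sub_div _ (q : ℝ), div_self hq0]
  · congr 1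
    simp only [mul_pow, neg_div, Finset.sum_neg_distrib]
    rw [← Finset.sum_div, ← Finset.sum_mul, sum_sq_sub_center]
    field_simp
    ring

/-- The Laplace method on `[-π, π]`: rescaling by `√n` and dominated convergence. -/
lemma tendsto_sqrt_mul_integral {G : ℕ → ℝ → ℝ} {b c : ℝ} (hc : 0 < c)
    (hcont : ∀ n, Continuous (G n))
    (hbound : ∀ n t, |t| ≤ Real.pi → |G n t| ≤ Real.exp (-c * t ^ 2) ^ n)
    (hlim : ∀ s, Tendsto (fun n : ℕ => G n (s / √n)) atTop (nhds (Real.exp (-b * s ^ 2)))) :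
    Tendsto (fun n : ℕ => √(n : ℝ) * ∫ t in (-Real.pi)..Real.pi, G n t) atTop
      (nhds √(Real.pi / b)) := by
  rw [← integral_gaussian]
  have hpi := Real.pi_pos
  have hDCT := tendsto_integral_filter_of_dominated_convergence (μ := volume) (l := atTop)
    (F := fun (n : ℕ) => (Set.Ioc (-(Real.pi * √n)) (Real.pi * √n)).indicator
      fun s => G n (s / √n))
    (f := fun s => Real.exp (-b * s ^ 2)) (fun s => Real.exp (-c * s ^ 2)) ?_ ?_
    (integrable_exp_neg_mul_sq hc) ?_
  · refine hDCT.congr' ?_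
    filter_upwards [eventually_gt_atTop 0] with n hn
    have hn0 : (0 : ℝ) < √n := Real.sqrt_pos.mpr (by exact_mod_cast hn)
    rw [integral_indicator measurableSet_Ioc,
      ← intervalIntegral.integral_of_le (by nlinarith),
      intervalIntegral.integral_comp_div (fun t => G n t) hn0.ne', smul_eq_mul, neg_div,
      mul_div_cancel_right₀ _ hn0.ne']
  · refine Eventually.of_forall fun n => ?_
    exact (((hcont n).comp (continuous_id.div_const _)).aestronglyMeasurable).indicator
      measurableSet_Ioc
  · filter_upwards [eventually_gt_atTop 0] with n hn
    refine Eventually.of_forall fun s => ?_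
    have hn1 : (0 : ℝ) < n := by exact_mod_cast hn
    have hn0 : (0 : ℝ) < √n := Real.sqrt_pos.mpr hn1
    by_cases hs : s ∈ Set.Ioc (-(Real.pi * √n)) (Real.pi * √n)
    · rw [Set.indicator_of_mem hs, Real.norm_eq_abs]
      refine (hbound n _ ?_).trans_eq ?_
      · rw [abs_div, abs_of_pos hn0, div_le_iff₀ hn0]
        exact abs_le.mpr ⟨hs.1.le, hs.2⟩
      · rw [← Real.exp_nat_mul, div_pow, Real.sq_sqrt hn1.le]
        congr 1
        field_simp
    · rw [Set.indicator_of_notMem hs, norm_zero]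
      positivity
  · refine Eventually.of_forall fun s => (hlim s).congr' ?_
    have hT : Tendsto (fun n : ℕ => Real.pi * √(n : ℝ)) atTop atTop :=
      (Real.tendsto_sqrt_atTop.comp tendsto_natCast_atTop_atTop).const_mul_atTop hpi
    filter_upwards [hT.eventually_gt_atTop |s|] with n hn
    rw [Set.indicator_of_mem]
    exact ⟨(abs_lt.mp hn).1, (abs_lt.mp hn).2.le⟩

lemma integral_cos_int_mul (m : ℤ) :
    ∫ t in (-Real.pi)..Real.pi, Real.cos (m * t) = if m = 0 then 2 * Real.pi else 0 := by
  split_ifs with h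
  · simp [h]; ring
  · have hm : (m : ℝ) ≠ 0 := by exact_mod_cast h
    rw [intervalIntegral.integral_comp_mul_left (fun t => Real.cos t) hm, integral_cos]
    simp [Real.sin_int_mul_pi]

lemma ofReal_centeredUniformChar_mul {q : ℕ} (hq : 0 < q) (t : ℝ) :
    ((q * centeredUniformChar q t : ℝ) : ℂ) =
      Complex.exp (-((q - 1) / 2 * t : ℝ) * Complex.I) *
        ∑ j ∈ Finset.range q, Complex.exp (t * Complex.I) ^ j := by
  have hq0 : (q : ℝ) ≠ 0 := by positivity
  have hterm (j : ℕ) : Complex.exp (-((q - 1) / 2 * t : ℝ) * Complex.I) *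
      Complex.exp (t * Complex.I) ^ j =
      Complex.exp (((j - (q - 1) / 2) * t : ℝ) * Complex.I) := by
    rw [← Complex.exp_nat_mul, ← Complex.exp_add]
    congr 1
    push_cast
    ring
  rw [centeredUniformChar, mul_div_cancel₀ _ hq0, Finset.mul_sum,
    Finset.sum_congr rfl fun j _ => hterm j]
  apply Complex.ext
  · rw [Complex.ofReal_re, Complex.re_sum]
    simp only [Complex.exp_ofReal_mul_I_re]
  · rw [Complex.ofReal_im, Complex.im_sum]
    simp only [Complex.exp_ofReal_mul_I_im]
    have h := Finset.sum_range_reflect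
      (fun j : ℕ => Real.sin (((j : ℝ) - (q - 1) / 2) * t)) q
    have h' : ∑ j ∈ Finset.range q, Real.sin ((((q - 1 - j : ℕ) : ℝ) - (q - 1) / 2) * t) =
        -∑ j ∈ Finset.range q, Real.sin (((j : ℝ) - (q - 1) / 2) * t) := by
      rw [← Finset.sum_neg_distrib]
      refine Finset.sum_congr rfl fun j hj => ?_
      have hj' := Finset.mem_range.mp hj
      rw [← Real.sin_neg, Nat.cast_sub (by omega), Nat.cast_sub (by omega)]
      congr 1
      push_cast
      ring
    linarith

lemma centeredUniformChar_pow_mul_cos {q : ℕ} (hq : 0 < q) (n m : ℕ) (t : ℝ) :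
    (q * centeredUniformChar q t) ^ n * Real.cos (((q - 1) * n / 2 - m) * t) =
      ∑ k ∈ ((∑ i ∈ Finset.range q, Polynomial.X ^ i : Polynomial ℕ) ^ n).support,
        (polyCoeff n q k : ℝ) * Real.cos (((k - m : ℤ) : ℝ) * t) := by
  have hpoly : (∑ j ∈ Finset.range q, Complex.exp (t * Complex.I) ^ j) ^ n =
      ∑ k ∈ ((∑ i ∈ Finset.range q, Polynomial.X ^ i : Polynomial ℕ) ^ n).support,
        (polyCoeff n q k : ℂ) * Complex.exp (t * Complex.I) ^ k := by
    have h := Polynomial.eval₂_eq_sum (f := Nat.castRingHom ℂ) (x := Complex.exp (t * Complex.I))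
      (p := (∑ i ∈ Finset.range q, Polynomial.X ^ i : Polynomial ℕ) ^ n)
    rw [Polynomial.eval₂_pow, Polynomial.eval₂_finsetSum] at h
    simpa [Polynomial.sum_def, polyCoeff] using h
  have hC : (((q * centeredUniformChar q t) ^ n : ℝ) : ℂ) *
      Complex.exp ((((q - 1) * n / 2 - m) * t : ℝ) * Complex.I) =
      ∑ k ∈ ((∑ i ∈ Finset.range q, Polynomial.X ^ i : Polynomial ℕ) ^ n).support,
        ((polyCoeff n q k : ℝ) : ℂ) *
          Complex.exp (((((k - m : ℤ) : ℝ) * t : ℝ) : ℂ) * Complex.I) := by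
    rw [Complex.ofReal_pow, ofReal_centeredUniformChar_mul hq, mul_pow, hpoly, Finset.mul_sum,
      Finset.sum_mul]
    refine Finset.sum_congr rfl fun k _ => ?_
    rw [mul_left_comm, mul_assoc, Complex.ofReal_natCast]
    congr 1
    rw [← Complex.exp_nat_mul, ← Complex.exp_nat_mul, ← Complex.exp_add, ← Complex.exp_add]
    congr 1
    push_cast
    ring
  have hre := congrArg Complex.re hC
  rw [Complex.re_ofReal_mul, Complex.re_sum] at hre
  simpa only [Complex.re_ofReal_mul, Complex.exp_ofReal_mul_I_re] using hre

lemma integral_centeredUniformChar_pow_mul_cos {q : ℕ} (hq : 0 < q) (n m : ℕ) :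
    ∫ t in (-Real.pi)..Real.pi,
        centeredUniformChar q t ^ n * Real.cos (((q - 1) * n / 2 - m) * t) =
      2 * Real.pi * (polyCoeff n q m / (q : ℝ) ^ n) := by
  have hq0 : (q : ℝ) ^ n ≠ 0 := by positivity
  have h : ∫ t in (-Real.pi)..Real.pi,
      (q * centeredUniformChar q t) ^ n * Real.cos (((q - 1) * n / 2 - m) * t) =
      2 * Real.pi * polyCoeff n q m := by
    simp_rw [centeredUniformChar_pow_mul_cos hq]
    rw [intervalIntegral.integral_finsetSum
      fun k _ => Continuous.intervalIntegrable (by fun_prop) _ _]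
    simp_rw [intervalIntegral.integral_const_mul, integral_cos_int_mul, sub_eq_zero, Nat.cast_inj]
    simp only [mul_ite, mul_zero, Finset.sum_ite_eq', Polynomial.mem_support_iff]
    split_ifs with h0
    · ring
    · simp [polyCoeff, not_not.mp h0]
  simp_rw [mul_pow, mul_assoc] at h
  rw [intervalIntegral.integral_const_mul] at h
  rw [mul_div_assoc', eq_div_iff hq0, mul_comm, h, mul_assoc]

lemma polyCoeff_div_le {q : ℕ} (hq : 0 < q) (n m : ℕ) :
    2 * Real.pi * (polyCoeff n q m / (q : ℝ) ^ n) ≤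
      ∫ t in (-Real.pi)..Real.pi, |centeredUniformChar q t| ^ n := by
  have hF := continuous_centeredUniformChar q
  rw [← integral_centeredUniformChar_pow_mul_cos hq]
  refine intervalIntegral.integral_mono_on (by linarith [Real.pi_pos])
    (Continuous.intervalIntegrable (by fun_prop) _ _)
    (Continuous.intervalIntegrable (by fun_prop) _ _) fun t _ => ?_
  refine (le_abs_self _).trans ?_
  rw [abs_mul, abs_pow]
  exact mul_le_of_le_one_right (by positivity) (Real.abs_cos_le_one _)

theorem max_polyCoeff_asymptotic (q : ℕ) (hq : 2 ≤ q) :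
    Tendsto
      (fun n : ℕ =>
        (((Finset.range ((q - 1) * n + 1)).sup fun k => polyCoeff n q k : ℕ) : ℝ) *
          Real.sqrt ((((q : ℝ) ^ 2 - 1) * Real.pi * n) / 6) / (q : ℝ) ^ n)
      atTop (nhds 1) := by
  have hq0 : 0 < q := by omega
  have hq2 : (2 : ℝ) ≤ q := by exact_mod_cast hq
  have hpi := Real.pi_pos
  have hF := continuous_centeredUniformChar q
  have hc : 0 < 1 / (q * Real.pi ^ 2) := by positivity
  have hvar : (0 : ℝ) < (q : ℝ) ^ 2 - 1 := by nlinarith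
  set b : ℝ := ((q : ℝ) ^ 2 - 1) / 24 with hb
  have hb0 : 0 < b := by positivity
  have hbound (n : ℕ) (t : ℝ) (ht : |t| ≤ Real.pi) :
      |centeredUniformChar q t| ^ n ≤ Real.exp (-(1 / (q * Real.pi ^ 2)) * t ^ 2) ^ n :=
    pow_le_pow_left₀ (abs_nonneg _) (abs_centeredUniformChar_le hq ht) n
  have hupper := tendsto_sqrt_mul_integral (b := b) hc
    (G := fun n t => |centeredUniformChar q t| ^ n) (fun n => by fun_prop)
    (fun n t ht => by simpa using hbound n t ht)
    (fun s => by
      simpa only [abs_pow, Real.abs_exp] using (tendsto_centeredUniformChar_pow hq0 s).abs)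
  let δ : ℕ → ℝ := fun n => ((q : ℝ) - 1) * n / 2 - ((q - 1) * n / 2 : ℕ)
  have hδ (n : ℕ) : |δ n| ≤ 1 := by
    have h1 : (((q - 1) * n : ℕ) : ℝ) = ((q : ℝ) - 1) * n := by
      rw [Nat.cast_mul, Nat.cast_sub (by omega), Nat.cast_one]
    have h2 : 2 * ((q - 1) * n / 2 : ℕ) ≤ (q - 1) * n := by omega
    have h3 : (q - 1) * n ≤ 2 * ((q - 1) * n / 2 : ℕ) + 1 := by omega
    have h2' : (2 : ℝ) * ((q - 1) * n / 2 : ℕ) ≤ ((q - 1) * n : ℕ) := by exact_mod_cast h2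
    have h3' : (((q - 1) * n : ℕ) : ℝ) ≤ 2 * ((q - 1) * n / 2 : ℕ) + 1 := by exact_mod_cast h3
    rw [h1] at h2' h3'
    exact abs_le.mpr ⟨by simp only [δ]; linarith, by simp only [δ]; linarith⟩
  have hlower := tendsto_sqrt_mul_integral (b := b) hc
    (G := fun n t => centeredUniformChar q t ^ n * Real.cos (δ n * t)) (fun n => by fun_prop)
    (fun n t ht => by
      rw [abs_mul, abs_pow]
      exact (mul_le_of_le_one_right (by positivity) (Real.abs_cos_le_one _)).trans
        (hbound n t ht))
    (fun s => by
      have hx : Tendsto (fun n : ℕ => s / √(n : ℝ)) atTop (nhds 0) :=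
        (Real.tendsto_sqrt_atTop.comp tendsto_natCast_atTop_atTop).const_div_atTop s
      have hy : Tendsto (fun n : ℕ => δ n * (s / √(n : ℝ))) atTop (nhds 0) := by
        refine squeeze_zero_norm (fun n => ?_) (by simpa only [norm_zero] using hx.norm)
        rw [norm_mul]
        exact mul_le_of_le_one_left (norm_nonneg _) (hδ n)
      simpa using (tendsto_centeredUniformChar_pow hq0 s).mul
        ((Real.continuous_cos.tendsto 0).comp hy))
  have hconst : √(Real.pi / b) * (√(((q : ℝ) ^ 2 - 1) * Real.pi / 6) / (2 * Real.pi)) = 1 := by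
    rw [← mul_div_assoc, ← Real.sqrt_mul (by positivity),
      show Real.pi / b * (((q : ℝ) ^ 2 - 1) * Real.pi / 6) = (2 * Real.pi) ^ 2 by
        rw [hb]; field_simp; ring,
      Real.sqrt_sq (by positivity), div_self (by positivity)]
  have hrewrite (n : ℕ) (x : ℝ) :
      x * √((((q : ℝ) ^ 2 - 1) * Real.pi * n) / 6) / (q : ℝ) ^ n =
        √(n : ℝ) * (2 * Real.pi * (x / (q : ℝ) ^ n)) *
          (√(((q : ℝ) ^ 2 - 1) * Real.pi / 6) / (2 * Real.pi)) := by
    rw [mul_div_right_comm _ (n : ℝ), Real.sqrt_mul (by positivity)]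
    field_simp
  simp_rw [hrewrite]
  suffices h : Tendsto (fun n : ℕ => √(n : ℝ) * (2 * Real.pi *
      ((((Finset.range ((q - 1) * n + 1)).sup fun k => polyCoeff n q k : ℕ) : ℝ) / (q : ℝ) ^ n)))
      atTop (nhds √(Real.pi / b)) by
    have h' := h.mul_const (√(((q : ℝ) ^ 2 - 1) * Real.pi / 6) / (2 * Real.pi))
    rwa [hconst] at h'
  refine tendsto_of_tendsto_of_tendsto_of_le_of_le hlower hupper ?_ ?_
  · intro n
    dsimp only [δ]
    rw [integral_centeredUniformChar_pow_mul_cos hq0]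
    gcongr
    exact Finset.le_sup (f := fun k => polyCoeff n q k)
      (Finset.mem_range.mpr (by omega))
  · intro n
    obtain ⟨k, -, hk⟩ := Finset.exists_mem_eq_sup (Finset.range ((q - 1) * n + 1)) (by simp)
      fun k => polyCoeff n q k
    dsimp only
    rw [hk]
    gcongr
    exact polyCoeff_div_le hq0 n k
end
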